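/- arXiv:2510.17608 — 2 statements merged into one kernel-verified Lean document; each statement's English description precedes it below -/
import Mathlib

section
/- Let d ≥ 1 and let p₀ be an everywhere positive, twice continuously differentiable probability density on ℝ^d such that log p₀ is (α₀, M₀)-weakly concave and ∇ log p₀ is L₀-Lipschitz, i.e. ‖∇ log p₀(x) − ∇ log p₀(y)‖ ≤ L₀ ‖x − y‖ for all x, y. Then for every t > 0, ∇ log p_t is L(t)-Lipschitz: ‖∇ log p_t(x) − ∇ log p_t(y)‖ ≤ L(t) ‖x − y‖ for all x, y ∈ ℝ^d. -/
open scoped RealInnerProductSpace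
open MeasureTheory

/-- The weak convexity profile of a function `g : ℝ^d → ℝ`. -/
noncomputable def profile {d : ℕ} (g : EuclideanSpace ℝ (Fin d) → ℝ) (r : ℝ) : ℝ :=
  sInf { z : ℝ | ∃ x y : EuclideanSpace ℝ (Fin d),
    ‖x - y‖ = r ∧ z = ⟪gradient g x - gradient g y, x - y⟫ / ‖x - y‖ ^ 2 }

/-- `f_M(r) = 2√M · tanh(√M · r / 2)`. -/
noncomputable def fM (M r : ℝ) : ℝ := 2 * Real.sqrt M * Real.tanh (Real.sqrt M * r / 2)

/-- `g` is `(α, M)`-weakly convex. -/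
def WeaklyConvex {d : ℕ} (g : EuclideanSpace ℝ (Fin d) → ℝ) (α M : ℝ) : Prop :=
  ∀ r : ℝ, 0 < r → α - fM M r / r ≤ profile g r

/-- `g` is `(α, M)`-weakly concave. -/
def WeaklyConcave {d : ℕ} (g : EuclideanSpace ℝ (Fin d) → ℝ) (α M : ℝ) : Prop :=
  WeaklyConvex (fun x => -g x) α M

/-- `c₀(t) = exp(∫₀ᵗ f(s) ds)`. -/
noncomputable def c0 (f : ℝ → ℝ) (t : ℝ) : ℝ := Real.exp (∫ s in (0:ℝ)..t, f s)

/-- `c₁(t) = ∫₀ᵗ exp(−2 ∫ₛᵗ f(v) dv) g(s)² ds`. -/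
noncomputable def c1 (f g : ℝ → ℝ) (t : ℝ) : ℝ :=
  ∫ s in (0:ℝ)..t, Real.exp (-2 * ∫ v in s..t, f v) * g s ^ 2

/-- `∫₀ᵗ exp(2 ∫₀ˢ f(v) dv) g(s)² ds`. -/
noncomputable def Jfg (f g : ℝ → ℝ) (t : ℝ) : ℝ :=
  ∫ s in (0:ℝ)..t, Real.exp (2 * ∫ v in (0:ℝ)..s, f v) * g s ^ 2

/-- `α(t) = 1 / (α₀⁻¹ c₀(t)⁻² + c₁(t))`. -/
noncomputable def alphaT (f g : ℝ → ℝ) (α₀ t : ℝ) : ℝ :=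
  1 / (α₀⁻¹ * ((c0 f t)⁻¹) ^ 2 + c1 f g t)

/-- `M(t) = M₀ c₀(t)² / (1 + α₀ ∫₀ᵗ exp(2 ∫₀ˢ f(v) dv) g(s)² ds)²`. -/
noncomputable def MT (f g : ℝ → ℝ) (α₀ M₀ t : ℝ) : ℝ :=
  M₀ * c0 f t ^ 2 / (1 + α₀ * Jfg f g t) ^ 2

/-- The law `p_t` of the forward process started at density `p₀`. -/
noncomputable def pt {d : ℕ} (f g : ℝ → ℝ) (p₀ : EuclideanSpace ℝ (Fin d) → ℝ)
    (t : ℝ) (x : EuclideanSpace ℝ (Fin d)) : ℝ :=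
  ∫ y : EuclideanSpace ℝ (Fin d),
    (2 * Real.pi * c1 f g t) ^ (-(d : ℝ) / 2) *
      Real.exp (-‖x - (c0 f t)⁻¹ • y‖ ^ 2 / (2 * c1 f g t)) * p₀ y

/-- The Lipschitz constant `L(t)`. -/
noncomputable def Lt (f g : ℝ → ℝ) (α₀ M₀ L₀ t : ℝ) : ℝ :=
  max (min (1 / c1 f g t) (c0 f t ^ 2 * L₀))
    (-(alphaT f g α₀ t - MT f g α₀ M₀ t))

lemma aux_quad {V : Type*} [NormedAddCommGroup V] [InnerProductSpace ℝ V] [CompleteSpace V]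
    (u : V → ℝ) (p : V → V) (hp : ∀ x, HasGradientAt u (p x) x) (L : ℝ)
    (h : ∀ a b, |u (a + b) + u (a - b) - 2 * u a| ≤ L * ‖b‖ ^ 2) (x b : V) :
    |u (x + b) - u x - ⟪p x, b⟫| ≤ L / 2 * ‖b‖ ^ 2 := by
  have hd : HasDerivAt (fun τ : ℝ => u (x + τ • b)) ⟪p x, b⟫ 0 := by
    have h1 : HasDerivAt (fun τ : ℝ => x + τ • b) b 0 := by
      simpa using ((hasDerivAt_id (0:ℝ)).smul_const b).const_add x
    have h2 : HasFDerivAt u (InnerProductSpace.toDual ℝ V (p x)) (x + (0:ℝ) • b) := by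
      simpa using (hp x).hasFDerivAt
    exact (h2.comp_hasDerivAt (0:ℝ) h1).congr_deriv (by simp)
  set r : ℝ → ℝ := fun τ => u (x + τ • b) - u x - τ * ⟪p x, b⟫ with hr
  have step : ∀ τ : ℝ, |r τ - 2 * r (τ / 2)| ≤ L * ‖b‖ ^ 2 * τ ^ 2 / 4 := by
    intro τ
    have := h (x + (τ / 2) • b) ((τ / 2) • b)
    have e1 : x + (τ / 2) • b + (τ / 2) • b = x + τ • b := by
      rw [add_assoc, ← add_smul]; congr 2; ring
    have e2 : x + (τ / 2) • b - (τ / 2) • b = x := by simp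
    rw [e1, e2, norm_smul, mul_pow, Real.norm_eq_abs, sq_abs] at this
    have e3 : r τ - 2 * r (τ / 2) = u (x + τ • b) + u x - 2 * u (x + (τ / 2) • b) := by
      simp only [hr]; ring
    rw [e3]
    calc _ ≤ _ := this
      _ = _ := by ring
  have it : ∀ n : ℕ, |r 1 - 2 ^ n * r ((1 / 2) ^ n)| ≤ L * ‖b‖ ^ 2 / 2 * (1 - (1 / 2) ^ n) := by
    intro n
    induction n with
    | zero => simp
    | succ k ih =>
      have s := step ((1 / 2) ^ k)
      have e : (1 / 2 : ℝ) ^ k / 2 = (1 / 2) ^ (k + 1) := by ring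
      rw [e] at s
      have h2 : |2 ^ k * (r ((1 / 2) ^ k) - 2 * r ((1 / 2) ^ (k + 1)))|
          ≤ 2 ^ k * (L * ‖b‖ ^ 2 * ((1 / 2) ^ k) ^ 2 / 4) := by
        rw [abs_mul, abs_of_pos (by positivity : (0:ℝ) < 2 ^ k)]
        exact mul_le_mul_of_nonneg_left s (by positivity)
      have h3 : (2:ℝ) ^ k * (L * ‖b‖ ^ 2 * ((1 / 2) ^ k) ^ 2 / 4)
          = L * ‖b‖ ^ 2 / 4 * (1 / 2) ^ k := by
        have : (2:ℝ) ^ k * (1 / 2) ^ k = 1 := by rw [← mul_pow]; norm_num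
        calc _ = L * ‖b‖ ^ 2 / 4 * (1 / 2) ^ k * ((2:ℝ) ^ k * (1 / 2) ^ k) := by ring
          _ = _ := by rw [this, mul_one]
      rw [h3] at h2
      have e4 : r 1 - 2 ^ (k + 1) * r ((1 / 2) ^ (k + 1)) =
        (r 1 - 2 ^ k * r ((1 / 2) ^ k)) +
          2 ^ k * (r ((1 / 2) ^ k) - 2 * r ((1 / 2) ^ (k + 1))) := by ring
      rw [e4]
      refine (abs_add_le _ _).trans ?_
      have h5 : L * ‖b‖ ^ 2 / 2 * (1 - (1 / 2) ^ (k + 1))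
        = L * ‖b‖ ^ 2 / 2 * (1 - (1 / 2) ^ k) + L * ‖b‖ ^ 2 / 4 * (1 / 2) ^ k := by ring
      rw [h5]
      exact add_le_add ih h2
  have lim : Filter.Tendsto (fun n : ℕ => (2:ℝ) ^ n * r ((1 / 2) ^ n)) Filter.atTop (nhds 0) := by
    have hrd : HasDerivAt r 0 0 := by
      have := (hd.sub_const (u x)).sub ((hasDerivAt_id (0:ℝ)).mul_const ⟪p x, b⟫)
      exact this.congr_deriv (by simp)
    have hs := hrd.tendsto_slope_zero
    have hseq : Filter.Tendsto (fun n : ℕ => (1 / 2 : ℝ) ^ n) Filter.atTop (nhdsWithin 0 {0}ᶜ) := by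
      rw [tendsto_nhdsWithin_iff]
      refine ⟨tendsto_pow_atTop_nhds_zero_of_lt_one (by norm_num) (by norm_num), ?_⟩
      exact Filter.Eventually.of_forall fun n => by simp
    have := hs.comp hseq
    refine this.congr fun n => ?_
    simp [hr]
  have hfin : |r 1 - 0| ≤ L * ‖b‖ ^ 2 / 2 * (1 - 0) := by
    refine le_of_tendsto_of_tendsto ((tendsto_const_nhds.sub lim).abs)
      ((tendsto_const_nhds).mul (tendsto_const_nhds.sub
        (tendsto_pow_atTop_nhds_zero_of_lt_one (r := (1/2:ℝ)) (by norm_num) (by norm_num)))) ?_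
    exact Filter.Eventually.of_forall it
  have : r 1 = u (x + b) - u x - ⟪p x, b⟫ := by simp [hr]
  rw [← this]
  simp only [sub_zero, mul_one] at hfin
  linarith

lemma lip_of_second_diff {V : Type*} [NormedAddCommGroup V] [InnerProductSpace ℝ V]
    [CompleteSpace V]
    (u : V → ℝ) (p : V → V) (hp : ∀ x, HasGradientAt u (p x) x) (L : ℝ) (hL : 0 ≤ L)
    (h : ∀ a b, |u (a + b) + u (a - b) - 2 * u a| ≤ L * ‖b‖ ^ 2) (x y : V) :
    ‖p x - p y‖ ≤ L * ‖x - y‖ := by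
  have q := aux_quad u p hp L h
  have key : ∀ η : V, ⟪p x - p y, η⟫ ≤ L / 2 * (‖η‖ ^ 2 + ‖x - y‖ ^ 2) := by
    intro η
    set w : V := (1 / 2 : ℝ) • (η + (x - y)) with hw
    have hη : η = (2:ℝ) • w - (x - y) := by rw [hw, smul_smul]; norm_num
    have a1 := abs_le.1 (q x (y + w - x))
    have a2 := abs_le.1 (q y w)
    have a3 := abs_le.1 (q y (x - w - y))
    have a4 := abs_le.1 (q x (-w))
    rw [show x + (y + w - x) = y + w by abel] at a1
    rw [show y + (x - w - y) = x + -w by abel] at a3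
    have e1 : y + w - x = w - (x - y) := by abel
    have e2 : x - w - y = (x - y) - w := by abel
    rw [e1] at a1
    rw [e2, norm_sub_rev] at a3
    rw [norm_neg] at a4
    have n1 : ‖η‖ ^ 2 + ‖x - y‖ ^ 2 = 2 * (‖w - (x - y)‖ ^ 2 + ‖w‖ ^ 2) := by
      rw [hη]
      have := parallelogram_law_with_norm ℝ (w - (x-y)) w
      have e : w - (x - y) + w = (2:ℝ) • w - (x-y) := by rw [two_smul]; abel
      have e' : w - (x - y) - w = -(x-y) := by abel
      rw [e, e', norm_neg] at this
      nlinarith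
    rw [n1]
    have i1 : ⟪p x - p y, η⟫ = ⟪p x, w - (x-y)⟫ - ⟪p x, -w⟫ + ⟪p y, (x-y) - w⟫ - ⟪p y, w⟫ := by
      rw [hη]; simp only [inner_sub_left, inner_sub_right, inner_neg_right, real_inner_smul_right]; ring
    rw [i1]
    linarith [a1.1, a2.2, a3.1, a4.2]
  by_cases hδ : ‖p x - p y‖ = 0
  · rw [hδ]; positivity
  have hpos : 0 < ‖p x - p y‖ := lt_of_le_of_ne (norm_nonneg _) (Ne.symm hδ)
  by_cases hΔ : ‖x - y‖ = 0
  · have : x = y := by simpa [sub_eq_zero] using hΔ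
    subst this; simp
  have hΔpos : 0 < ‖x - y‖ := lt_of_le_of_ne (norm_nonneg _) (Ne.symm hΔ)
  have := key ((‖x - y‖ / ‖p x - p y‖) • (p x - p y))
  rw [real_inner_smul_right, real_inner_self_eq_norm_sq, norm_smul, Real.norm_eq_abs,
    abs_of_pos (by positivity)] at this
  have e1 : ‖x - y‖ / ‖p x - p y‖ * ‖p x - p y‖ ^ 2 = ‖x - y‖ * ‖p x - p y‖ := by
    field_simp
  have e2 : ‖x - y‖ / ‖p x - p y‖ * ‖p x - p y‖ = ‖x - y‖ := by field_simp
  rw [e1, e2] at this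
  have h3 : ‖x - y‖ * ‖p x - p y‖ ≤ ‖x - y‖ * (L * ‖x - y‖) := by nlinarith
  exact le_of_mul_le_mul_left h3 hΔpos

lemma second_test (ψ ψ1 : ℝ → ℝ) (c : ℝ) (h1 : ∀ᶠ τ in nhds 0, HasDerivAt ψ (ψ1 τ) τ)
    (h2 : HasDerivAt ψ1 c 0) (hmin : IsLocalMin ψ 0) : ψ1 0 = 0 ∧ 0 ≤ c := by
  have z : ψ1 0 = 0 := hmin.hasDerivAt_eq_zero h1.self_of_nhds
  refine ⟨z, ?_⟩
  by_contra hc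
  push Not at hc
  have hde : deriv ψ =ᶠ[nhds 0] ψ1 := h1.mono fun τ h => h.deriv
  have hdd : deriv (deriv ψ) 0 = c := by rw [hde.deriv_eq, h2.deriv]
  have hmax : IsLocalMax ψ 0 := isLocalMax_of_deriv_deriv_neg (by rw [hdd]; exact hc)
    (by rw [h1.self_of_nhds.deriv, z]) h1.self_of_nhds.continuousAt
  have hconst : ψ =ᶠ[nhds 0] fun _ => ψ 0 := by
    filter_upwards [hmin, hmax] with τ a b
    exact le_antisymm b a
  have hd0 : deriv ψ =ᶠ[nhds 0] fun _ => 0 := by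
    have := hconst.deriv
    simpa using this
  have : deriv (deriv ψ) 0 = 0 := by rw [hd0.deriv_eq]; simp
  linarith

set_option maxHeartbeats 1000000 in
lemma mp_core {d : ℕ} (b : OrthonormalBasis (Fin d) ℝ (EuclideanSpace ℝ (Fin d))) (i0 : Fin d)
    (a p q p' q' : EuclideanSpace ℝ (Fin d)) (ρ σ β C n lam : ℝ) (Dx Dy Dx' Dy' : Fin d → ℝ)
    (f1r f1s f2r f2s fsr fss : ℝ)
    (hβ : 0 < β) (hn : 1 ≤ n) (hN : n ^ 2 = 1 + ‖a‖ ^ 2 + ρ ^ 2) (hρ : 0 < ρ) (hσ : |σ| < ρ)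
    (hC : 0 ≤ C)
    (hp : ‖p‖ ≤ 3 * C * n) (hq : ‖q‖ ≤ 3 * C * n) (hp' : ‖p'‖ ≤ 3 * C * n)
    (hq' : ‖q'‖ ≤ 3 * C * n) (hf1 : |f1r| ≤ 2 * C * n)
    (ha : ∀ i, ⟪p, b i⟫ + ⟪q, b i⟫ - ⟪p', b i⟫ - ⟪q', b i⟫ + β * (4 * n ^ 2 * ⟪a, b i⟫) = 0)
    (hr : ⟪p, b i0⟫ - ⟪q, b i0⟫ + f1r + β * (4 * n ^ 2 * ρ) = 0)
    (hs : ⟪p', b i0⟫ - ⟪q', b i0⟫ + f1s = 0)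
    (hθ : ∀ i, i ≠ i0 → ρ * (⟪p, b i⟫ - ⟪q, b i⟫) = σ * (⟪p', b i⟫ - ⟪q', b i⟫))
    (h2a : ∀ i, i ≠ i0 → 0 ≤ Dx i + Dy i - Dx' i - Dy' i + β * (4 * n ^ 2 + 8 * ⟪a, b i⟫ ^ 2))
    (h2r : 0 ≤ Dx i0 + Dy i0 + f2r + β * (4 * n ^ 2 + 8 * ρ ^ 2))
    (h2s : 0 ≤ -(Dx' i0 + Dy' i0) - f2s)
    (hF : fsr - f1r ^ 2 / 4 - f2r / 2 = fss - f1s ^ 2 / 4 - f2s / 2)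
    (ht : (∑ i, (Dx i - ⟪p, b i⟫ ^ 2)) / 2 + (∑ i, (Dy i - ⟪q, b i⟫ ^ 2)) / 2
      - (∑ i, (Dx' i - ⟪p', b i⟫ ^ 2)) / 2 - (∑ i, (Dy' i - ⟪q', b i⟫ ^ 2)) / 2
      + fsr - fss + lam * (β * n ^ 4) ≤ 0)
    (hlam : lam = 20 * C + 6 * d + 1) : False := by
  have hn0 : 0 ≤ n := by linarith
  have hnn : 1 ≤ n ^ 2 := by nlinarith
  have han : ‖a‖ ≤ n := by
    apply le_of_sq_le_sq _ hn0
    nlinarith [sq_nonneg ρ]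
  have hrn : ρ ≤ n := by
    apply le_of_sq_le_sq _ hn0
    nlinarith [sq_nonneg ‖a‖]
  have hai : ∀ i, ⟪a, b i⟫ ^ 2 ≤ n ^ 2 := by
    intro i
    have h1 : |⟪a, b i⟫| ≤ ‖a‖ * ‖b i‖ := abs_real_inner_le_norm _ _
    rw [b.norm_eq_one, mul_one] at h1
    exact sq_le_sq' (by linarith [neg_abs_le ⟪a, b i⟫]) (by linarith [le_abs_self ⟪a, b i⟫])
  set K : ℝ := (f2s - f2r) / 2 - ((⟪p, b i0⟫ - ⟪q, b i0⟫) ^ 2 - f1s ^ 2) / 4 with hK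
  have term : ∀ i, -6 * β * n ^ 2
      + β * n ^ 2 * ((⟪p, b i⟫ + ⟪q, b i⟫ + ⟪p', b i⟫ + ⟪q', b i⟫) * ⟪a, b i⟫)
      + (if i = i0 then K else 0) ≤
      (Dx i - ⟪p, b i⟫ ^ 2) / 2 + (Dy i - ⟪q, b i⟫ ^ 2) / 2
      - (Dx' i - ⟪p', b i⟫ ^ 2) / 2 - (Dy' i - ⟪q', b i⟫ ^ 2) / 2 := by
    intro i
    have hai' := mul_le_mul_of_nonneg_left (hai i) hβ.le
    have hS : (⟪p, b i⟫ + ⟪q, b i⟫) ^ 2 - (⟪p', b i⟫ + ⟪q', b i⟫) ^ 2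
        = -4 * β * n ^ 2 * ((⟪p, b i⟫ + ⟪q, b i⟫ + ⟪p', b i⟫ + ⟪q', b i⟫) * ⟪a, b i⟫) := by
      have : ⟪p, b i⟫ + ⟪q, b i⟫ - ⟪p', b i⟫ - ⟪q', b i⟫ = - (β * (4 * n ^ 2 * ⟪a, b i⟫)) := by
        linarith [ha i]
      calc _ = (⟪p, b i⟫ + ⟪q, b i⟫ + ⟪p', b i⟫ + ⟪q', b i⟫)
            * (⟪p, b i⟫ + ⟪q, b i⟫ - ⟪p', b i⟫ - ⟪q', b i⟫) := by ring
        _ = _ := by rw [this]; ring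
    by_cases hi : i = i0
    · subst hi
      simp only [if_true]
      have hR' : (⟪p', b i⟫ - ⟪q', b i⟫) ^ 2 = f1s ^ 2 := by
        have : ⟪p', b i⟫ - ⟪q', b i⟫ = - f1s := by linarith
        rw [this]; ring
      have hrr : β * ρ ^ 2 ≤ β * n ^ 2 :=
        mul_le_mul_of_nonneg_left (by nlinarith) hβ.le
      rw [hK]
      linarith
    · simp only [if_neg hi]
      have hR : (⟪p, b i⟫ - ⟪q, b i⟫) ^ 2 ≤ (⟪p', b i⟫ - ⟪q', b i⟫) ^ 2 := by
        have h1 := hθ i hi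
        have h2 : ρ ^ 2 * (⟪p, b i⟫ - ⟪q, b i⟫) ^ 2 = σ ^ 2 * (⟪p', b i⟫ - ⟪q', b i⟫) ^ 2 := by
          rw [← mul_pow, h1, mul_pow]
        have h3 : σ ^ 2 ≤ ρ ^ 2 := by
          rw [← sq_abs σ]; nlinarith [abs_nonneg σ]
        have h4 : ρ ^ 2 * (⟪p, b i⟫ - ⟪q, b i⟫) ^ 2 ≤ ρ ^ 2 * (⟪p', b i⟫ - ⟪q', b i⟫) ^ 2 := by
          rw [h2]; exact mul_le_mul_of_nonneg_right h3 (sq_nonneg _)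
        exact le_of_mul_le_mul_left h4 (by positivity)
      have := h2a i hi
      linarith
  have hsum := Finset.sum_le_sum (s := Finset.univ) fun i _ => term i
  simp only [Finset.sum_add_distrib, Finset.sum_sub_distrib, ← Finset.mul_sum, ← Finset.sum_div,
    Finset.sum_ite_eq', Finset.mem_univ, if_true, Finset.sum_const, Finset.card_univ,
    Fintype.card_fin, nsmul_eq_mul] at hsum ht
  have hin : ∑ i, (⟪p, b i⟫ + ⟪q, b i⟫ + ⟪p', b i⟫ + ⟪q', b i⟫) * ⟪a, b i⟫ = ⟪p + q + p' + q', a⟫ := by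
    rw [← b.sum_inner_mul_inner (p + q + p' + q') a]
    refine Finset.sum_congr rfl fun i _ => ?_
    rw [real_inner_comm (b i) a]
    simp only [inner_add_left]
  rw [hin] at hsum
  have hSS : -(12 * C * n ^ 2) ≤ ⟪p + q + p' + q', a⟫ := by
    have h1 : |⟪p + q + p' + q', a⟫| ≤ ‖p + q + p' + q'‖ * ‖a‖ := abs_real_inner_le_norm _ _
    have h2 : ‖p + q + p' + q'‖ ≤ 12 * C * n := by
      have := norm_add_le (p + q + p') q'
      have := norm_add_le (p + q) p'
      have := norm_add_le p q
      linarith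
    have h3 : ‖p + q + p' + q'‖ * ‖a‖ ≤ 12 * C * n * n :=
      mul_le_mul h2 han (norm_nonneg _) (by positivity)
    linarith [neg_abs_le ⟪p + q + p' + q', a⟫]
  have hSS' : -(12 * C * β * n ^ 4) ≤ β * n ^ 2 * ⟪p + q + p' + q', a⟫ := by
    have := mul_le_mul_of_nonneg_left hSS (by positivity : 0 ≤ β * n ^ 2)
    calc _ = β * n ^ 2 * -(12 * C * n ^ 2) := by ring
      _ ≤ _ := this
  have hRR : (⟪p, b i0⟫ - ⟪q, b i0⟫) ^ 2 ≤ f1r ^ 2 + 32 * C * β * n ^ 4 := by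
    have e : (⟪p, b i0⟫ - ⟪q, b i0⟫) ^ 2 - f1r ^ 2
        = -(⟪p, b i0⟫ - ⟪q, b i0⟫ - f1r) * (β * (4 * n ^ 2 * ρ)) := by
      have : β * (4 * n ^ 2 * ρ) = - (⟪p, b i0⟫ - ⟪q, b i0⟫ + f1r) := by linarith
      rw [this]; ring
    have hb : ∀ w : EuclideanSpace ℝ (Fin d), |⟪w, b i0⟫| ≤ ‖w‖ := by
      intro w
      have := abs_real_inner_le_norm w (b i0)
      rwa [b.norm_eq_one, mul_one] at this
    have h1 : -(⟪p, b i0⟫ - ⟪q, b i0⟫ - f1r) ≤ 8 * C * n := by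
      linarith [neg_abs_le ⟪p, b i0⟫, le_abs_self ⟪q, b i0⟫, le_abs_self f1r, hb p, hb q]
    have h2 : -(⟪p, b i0⟫ - ⟪q, b i0⟫ - f1r) * (β * (4 * n ^ 2 * ρ))
        ≤ 8 * C * n * (β * (4 * n ^ 2 * ρ)) := mul_le_mul_of_nonneg_right h1 (by positivity)
    have h3 : 8 * C * n * (β * (4 * n ^ 2 * ρ)) ≤ 8 * C * n * (β * (4 * n ^ 2 * n)) := by gcongr
    calc _ = f1r ^ 2 + ((⟪p, b i0⟫ - ⟪q, b i0⟫) ^ 2 - f1r ^ 2) := by ring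
      _ ≤ f1r ^ 2 + 8 * C * n * (β * (4 * n ^ 2 * n)) := by linarith
      _ = _ := by ring
  have hn4 : (d:ℝ) * (6 * β * n ^ 2) ≤ 6 * d * (β * n ^ 4) := by
    have : n ^ 2 ≤ n ^ 4 := by nlinarith
    have := mul_le_mul_of_nonneg_left this (by positivity : (0:ℝ) ≤ 6 * d * β)
    linarith
  have hpos : 0 < β * n ^ 4 := by positivity
  rw [hlam] at ht
  rw [hK] at hsum
  linarith

lemma exists_basis_first {d : ℕ} (i0 : Fin d) (θ : EuclideanSpace ℝ (Fin d)) (hθ : ‖θ‖ = 1) :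
    ∃ b : OrthonormalBasis (Fin d) ℝ (EuclideanSpace ℝ (Fin d)), b i0 = θ := by
  have ho : Orthonormal ℝ (Set.domRestrict ({i0} : Set (Fin d)) (fun _ : Fin d => θ)) := by
    refine ⟨fun i => by simpa using hθ, fun i j hij => ?_⟩
    exact absurd (Subsingleton.elim i j) hij
  obtain ⟨b, hb⟩ := ho.exists_orthonormalBasis_extension_of_card_eq (by simp)
  exact ⟨b, hb i0 (by simp)⟩

lemma left_deriv_nonpos (ψ : ℝ → ℝ) (c s : ℝ) (hs : 0 < s) (h : HasDerivAt ψ c s)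
    (hmin : ∀ s' ∈ Set.Icc 0 s, ψ s ≤ ψ s') : c ≤ 0 := by
  have h1 := (hasDerivWithinAt_iff_tendsto_slope' (s := Set.Iio s) (by simp)).1
    (h.hasDerivWithinAt (s := Set.Iio s))
  refine le_of_tendsto h1 ?_
  have : Set.Ioo 0 s ∈ nhdsWithin s (Set.Iio s) := Ioo_mem_nhdsLT hs
  filter_upwards [this] with s' hs'
  rw [slope_def_field]
  exact div_nonpos_of_nonneg_of_nonpos (by linarith [hmin s' ⟨hs'.1.le, hs'.2.le⟩])
    (by linarith [hs'.2])

lemma curve_deriv {V : Type*} [NormedAddCommGroup V] [InnerProductSpace ℝ V] [CompleteSpace V]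
    (u : V → ℝ) (p : V) (γ : ℝ → V) (e : V) (τ : ℝ) (hu : HasGradientAt u p (γ τ))
    (hγ : HasDerivAt γ e τ) : HasDerivAt (fun t => u (γ t)) ⟪p, e⟫ τ :=
  (hu.hasFDerivAt.comp_hasDerivAt τ hγ).congr_deriv (by simp)

lemma line_deriv' {V : Type*} [NormedAddCommGroup V] [InnerProductSpace ℝ V] [CompleteSpace V]
    (u : V → ℝ) (p : V → V) (hu : ∀ x, HasGradientAt u (p x) x) (x e : V) (τ : ℝ) :
    HasDerivAt (fun t : ℝ => u (x + t • e)) ⟪p (x + τ • e), e⟫ τ := by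
  refine curve_deriv u _ (fun t : ℝ => x + t • e) e τ (hu _) ?_
  simpa using ((hasDerivAt_id τ).smul_const e).const_add x

/-- The four point functional. -/
def KK {V : Type*} [AddCommGroup V] [Module ℝ V] (u : ℝ → V → ℝ) (F : ℝ → ℝ → ℝ)
    (s : ℝ) (a θ : V) (ρ σ : ℝ) : ℝ :=
  u s (a + ρ • θ) + u s (a - ρ • θ) - u s (a + σ • θ) - u s (a - σ • θ) + F s ρ - F s σ

set_option maxHeartbeats 1000000 in
lemma mp_min {d : ℕ} (i0 : Fin d) (T : ℝ)
    (u : ℝ → EuclideanSpace ℝ (Fin d) → ℝ)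
    (p : ℝ → EuclideanSpace ℝ (Fin d) → EuclideanSpace ℝ (Fin d))
    (D2 : ℝ → EuclideanSpace ℝ (Fin d) → EuclideanSpace ℝ (Fin d) → ℝ)
    (F F1 F2 Fs : ℝ → ℝ → ℝ) (C : ℝ) (hC : 0 ≤ C)
    (hp : ∀ s ∈ Set.Ioc 0 T, ∀ x, HasGradientAt (u s) (p s x) x)
    (hD2 : ∀ s ∈ Set.Ioc 0 T, ∀ x e,
      HasDerivAt (fun τ : ℝ => ⟪p s (x + τ • e), e⟫) (D2 s x e) 0)
    (hD2n : ∀ s x e, D2 s x (-e) = D2 s x e)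
    (hus : ∀ s ∈ Set.Ioc 0 T, ∀ x,
      ∀ b : OrthonormalBasis (Fin d) ℝ (EuclideanSpace ℝ (Fin d)),
      HasDerivAt (fun s => u s x) ((∑ i, (D2 s x (b i) - ⟪p s x, b i⟫ ^ 2)) / 2) s)
    (hF1 : ∀ s ∈ Set.Ioc 0 T, ∀ ρ, HasDerivAt (F s) (F1 s ρ) ρ)
    (hF2 : ∀ s ∈ Set.Ioc 0 T, ∀ ρ, HasDerivAt (F1 s) (F2 s ρ) ρ)
    (hFs : ∀ s ∈ Set.Ioc 0 T, ∀ ρ, HasDerivAt (fun s => F s ρ) (Fs s ρ) s)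
    (hFeq : ∀ s ∈ Set.Ioc 0 T, ∀ ρ σ, Fs s ρ - F1 s ρ ^ 2 / 4 - F2 s ρ / 2
      = Fs s σ - F1 s σ ^ 2 / 4 - F2 s σ / 2)
    (hpb : ∀ s ∈ Set.Ioc 0 T, ∀ x, ‖p s x‖ ≤ C * (1 + ‖x‖))
    (hF1b : ∀ s ∈ Set.Ioc 0 T, ∀ ρ, |F1 s ρ| ≤ C * (1 + |ρ|))
    (ε lam R : ℝ) (hε : 0 < ε) (hlam : lam = 20 * C + 6 * d + 1)
    (s : ℝ) (a θ : EuclideanSpace ℝ (Fin d)) (ρ σ : ℝ) (hs : s ∈ Set.Ioc 0 T)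
    (haR : ‖a‖ < R) (hθ : ‖θ‖ = 1) (hρ0 : 0 < ρ) (hρR : ρ < R) (hσ : |σ| < ρ)
    (hmin : ∀ s' ∈ Set.Icc 0 T, ∀ a' θ' : EuclideanSpace ℝ (Fin d), ∀ ρ' σ' : ℝ,
      ‖a'‖ ≤ R → ‖θ'‖ = 1 → 0 ≤ ρ' → ρ' ≤ R → |σ'| ≤ ρ' →
      KK u F s a θ ρ σ + ε * Real.exp (lam * s) * (1 + ‖a‖ ^ 2 + ρ ^ 2) ^ 2
      ≤ KK u F s' a' θ' ρ' σ' + ε * Real.exp (lam * s') * (1 + ‖a'‖ ^ 2 + ρ' ^ 2) ^ 2) :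
    False := by
  obtain ⟨b, hb⟩ := exists_basis_first i0 θ hθ
  have hsI : s ∈ Set.Icc 0 T := ⟨hs.1.le, hs.2⟩
  set β := ε * Real.exp (lam * s) with hβdef
  have hβ : 0 < β := by positivity
  set n := Real.sqrt (1 + ‖a‖ ^ 2 + ρ ^ 2) with hndef
  have hN : n ^ 2 = 1 + ‖a‖ ^ 2 + ρ ^ 2 := Real.sq_sqrt (by positivity)
  have hn : 1 ≤ n := by
    rw [hndef]; apply Real.one_le_sqrt.2; nlinarith [sq_nonneg ‖a‖, sq_nonneg ρ]
  have hn0 : 0 ≤ n := by linarith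
  have han : ‖a‖ ≤ n := by
    apply le_of_sq_le_sq _ hn0
    nlinarith [sq_nonneg ρ]
  have hrn : ρ ≤ n := by
    apply le_of_sq_le_sq _ hn0
    nlinarith [sq_nonneg ‖a‖]
  -- the line in direction `a`
  have lineA : ∀ i, _ ∧ _ := fun i => second_test
    (fun τ => u s ((a + ρ • θ) + τ • b i) + u s ((a - ρ • θ) + τ • b i)
      - u s ((a + σ • θ) + τ • b i) - u s ((a - σ • θ) + τ • b i) + F s ρ - F s σ
      + β * (n ^ 2 + 2 * τ * ⟪a, b i⟫ + τ ^ 2) ^ 2)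
    (fun τ => ⟪p s ((a + ρ • θ) + τ • b i), b i⟫ + ⟪p s ((a - ρ • θ) + τ • b i), b i⟫
      - ⟪p s ((a + σ • θ) + τ • b i), b i⟫ - ⟪p s ((a - σ • θ) + τ • b i), b i⟫
      + β * (2 * (n ^ 2 + 2 * τ * ⟪a, b i⟫ + τ ^ 2) * (2 * ⟪a, b i⟫ + 2 * τ)))
    (D2 s (a + ρ • θ) (b i) + D2 s (a - ρ • θ) (b i) - D2 s (a + σ • θ) (b i)
      - D2 s (a - σ • θ) (b i) + β * (4 * n ^ 2 + 8 * ⟪a, b i⟫ ^ 2))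
    (by
      refine Filter.Eventually.of_forall fun τ => ?_
      have hq : HasDerivAt (fun τ : ℝ => n ^ 2 + 2 * τ * ⟪a, b i⟫ + τ ^ 2)
          (2 * ⟪a, b i⟫ + 2 * τ) τ := by
        have := (((hasDerivAt_id τ).const_mul 2).mul_const ⟪a, b i⟫).const_add (n ^ 2)
        exact (this.add ((hasDerivAt_id τ).pow 2)).congr_deriv (by simp)
      have := ((((line_deriv' (u s) (p s) (hp s hs) (a + ρ • θ) (b i) τ).add
        (line_deriv' (u s) (p s) (hp s hs) (a - ρ • θ) (b i) τ)).sub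
        (line_deriv' (u s) (p s) (hp s hs) (a + σ • θ) (b i) τ)).sub
        (line_deriv' (u s) (p s) (hp s hs) (a - σ • θ) (b i) τ))
      have := (((this.add_const (F s ρ)).sub_const (F s σ)).add ((hq.pow 2).const_mul β))
      exact this.congr_deriv (by simp))
    (by
      have hq : HasDerivAt (fun τ : ℝ => n ^ 2 + 2 * τ * ⟪a, b i⟫ + τ ^ 2)
          (2 * ⟪a, b i⟫) 0 := by
        have := (((hasDerivAt_id (0:ℝ)).const_mul 2).mul_const ⟪a, b i⟫).const_add (n ^ 2)
        exact (this.add ((hasDerivAt_id (0:ℝ)).pow 2)).congr_deriv (by simp)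
      have hq2 : HasDerivAt (fun τ : ℝ => 2 * ⟪a, b i⟫ + 2 * τ) 2 0 := by
        exact (((hasDerivAt_id (0:ℝ)).const_mul 2).const_add (2 * ⟪a, b i⟫)).congr_deriv (by simp)
      have := (((hD2 s hs (a + ρ • θ) (b i)).add (hD2 s hs (a - ρ • θ) (b i))).sub
        (hD2 s hs (a + σ • θ) (b i))).sub (hD2 s hs (a - σ • θ) (b i))
      have := this.add (((hq.const_mul 2).mul hq2).const_mul β)
      exact this.congr_deriv (by ring))
    (by
      have hev : ∀ᶠ τ : ℝ in nhds 0, ‖a + τ • b i‖ < R := by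
        have hc : ContinuousAt (fun τ : ℝ => ‖a + τ • b i‖) 0 := by fun_prop
        exact hc.eventually_lt continuousAt_const (by simpa using haR)
      filter_upwards [hev] with τ hτ
      have := hmin s hsI (a + τ • b i) θ ρ σ hτ.le hθ hρ0.le hρR.le hσ.le
      have hnorm : 1 + ‖a + τ • b i‖ ^ 2 + ρ ^ 2 = n ^ 2 + 2 * τ * ⟪a, b i⟫ + τ ^ 2 := by
        rw [norm_add_sq_real, hN, norm_smul, real_inner_smul_right, b.norm_eq_one,
          Real.norm_eq_abs, mul_one, sq_abs]
        ring
      rw [hnorm, ← hN] at this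
      simp only [KK] at this
      rw [show a + τ • b i + ρ • θ = a + ρ • θ + τ • b i by abel,
        show a + τ • b i - ρ • θ = a - ρ • θ + τ • b i by abel,
        show a + τ • b i + σ • θ = a + σ • θ + τ • b i by abel,
        show a + τ • b i - σ • θ = a - σ • θ + τ • b i by abel] at this
      simpa using this)
  -- the line in direction `ρ`
  have lineR := second_test
    (fun τ => u s ((a + ρ • θ) + τ • θ) + u s ((a - ρ • θ) + τ • (-θ))
      - u s (a + σ • θ) - u s (a - σ • θ) + F s (ρ + τ) - F s σ
      + β * (n ^ 2 + 2 * τ * ρ + τ ^ 2) ^ 2)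
    (fun τ => ⟪p s ((a + ρ • θ) + τ • θ), θ⟫ + ⟪p s ((a - ρ • θ) + τ • (-θ)), -θ⟫
      + F1 s (ρ + τ)
      + β * (2 * (n ^ 2 + 2 * τ * ρ + τ ^ 2) * (2 * ρ + 2 * τ)))
    (D2 s (a + ρ • θ) θ + D2 s (a - ρ • θ) (-θ) + F2 s ρ
      + β * (4 * n ^ 2 + 8 * ρ ^ 2))
    (by
      refine Filter.Eventually.of_forall fun τ => ?_
      have hq : HasDerivAt (fun τ : ℝ => n ^ 2 + 2 * τ * ρ + τ ^ 2)
          (2 * ρ + 2 * τ) τ := by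
        have := (((hasDerivAt_id τ).const_mul 2).mul_const ρ).const_add (n ^ 2)
        exact (this.add ((hasDerivAt_id τ).pow 2)).congr_deriv (by simp)
      have hFF : HasDerivAt (fun τ : ℝ => F s (ρ + τ)) (F1 s (ρ + τ)) τ := by
        exact (HasDerivAt.comp τ (hF1 s hs (ρ + τ)) ((hasDerivAt_id τ).const_add ρ)).congr_deriv
          (by simp)
      have := ((((line_deriv' (u s) (p s) (hp s hs) (a + ρ • θ) θ τ).add
        (line_deriv' (u s) (p s) (hp s hs) (a - ρ • θ) (-θ) τ)).sub_const
        (u s (a + σ • θ))).sub_const (u s (a - σ • θ)))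
      have := (((this.add hFF).sub_const (F s σ)).add ((hq.pow 2).const_mul β))
      exact this.congr_deriv (by simp))
    (by
      have hq : HasDerivAt (fun τ : ℝ => n ^ 2 + 2 * τ * ρ + τ ^ 2)
          (2 * ρ) 0 := by
        have := (((hasDerivAt_id (0:ℝ)).const_mul 2).mul_const ρ).const_add (n ^ 2)
        exact (this.add ((hasDerivAt_id (0:ℝ)).pow 2)).congr_deriv (by simp)
      have hq2 : HasDerivAt (fun τ : ℝ => 2 * ρ + 2 * τ) 2 0 := by
        exact (((hasDerivAt_id (0:ℝ)).const_mul 2).const_add (2 * ρ)).congr_deriv (by simp)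
      have hFF : HasDerivAt (fun τ : ℝ => F1 s (ρ + τ)) (F2 s ρ) 0 := by
        have h0 : HasDerivAt (F1 s) (F2 s ρ) (ρ + 0) := by simpa using hF2 s hs ρ
        exact (HasDerivAt.comp (0:ℝ) h0 ((hasDerivAt_id (0:ℝ)).const_add ρ)).congr_deriv (by simp)
      have := ((hD2 s hs (a + ρ • θ) θ).add (hD2 s hs (a - ρ • θ) (-θ))).add hFF
      have := this.add (((hq.const_mul 2).mul hq2).const_mul β)
      exact this.congr_deriv (by ring))
    (by
      have hev : ∀ᶠ τ : ℝ in nhds 0, ρ + τ < R := by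
        have hc : ContinuousAt (fun τ : ℝ => ρ + τ) 0 := by fun_prop
        exact hc.eventually_lt continuousAt_const (by simpa using hρR)
      have hev2 : ∀ᶠ τ : ℝ in nhds 0, |σ| < ρ + τ := by
        have hc : ContinuousAt (fun τ : ℝ => ρ + τ) 0 := by fun_prop
        exact continuousAt_const.eventually_lt hc (by simpa using hσ)
      filter_upwards [hev, hev2] with τ hτ hτ2
      have := hmin s hsI a θ (ρ + τ) σ haR.le hθ ((abs_nonneg σ).trans hτ2.le) hτ.le hτ2.le
      have hnorm : 1 + ‖a‖ ^ 2 + (ρ + τ) ^ 2 = n ^ 2 + 2 * τ * ρ + τ ^ 2 := by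
        rw [hN]; ring
      rw [hnorm, ← hN] at this
      simp only [KK] at this
      rw [show a + (ρ + τ) • θ = a + ρ • θ + τ • θ by rw [add_smul]; abel,
        show a - (ρ + τ) • θ = a - ρ • θ + τ • (-θ) by rw [add_smul, smul_neg]; abel] at this
      simpa using this)
  -- the line in direction `σ`
  have lineS := second_test
    (fun τ => u s (a + ρ • θ) + u s (a - ρ • θ)
      - u s ((a + σ • θ) + τ • θ) - u s ((a - σ • θ) + τ • (-θ)) + F s ρ - F s (σ + τ)
      + β * (n ^ 2) ^ 2)
    (fun τ => - ⟪p s ((a + σ • θ) + τ • θ), θ⟫ - ⟪p s ((a - σ • θ) + τ • (-θ)), -θ⟫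
      - F1 s (σ + τ))
    (- D2 s (a + σ • θ) θ - D2 s (a - σ • θ) (-θ) - F2 s σ)
    (by
      refine Filter.Eventually.of_forall fun τ => ?_
      have hFF : HasDerivAt (fun τ : ℝ => F s (σ + τ)) (F1 s (σ + τ)) τ := by
        exact (HasDerivAt.comp τ (hF1 s hs (σ + τ)) ((hasDerivAt_id τ).const_add σ)).congr_deriv
          (by simp)
      have := (((line_deriv' (u s) (p s) (hp s hs) (a + σ • θ) θ τ).const_sub
        (u s (a + ρ • θ) + u s (a - ρ • θ))).sub
        (line_deriv' (u s) (p s) (hp s hs) (a - σ • θ) (-θ) τ))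
      have := (((this.add_const (F s ρ)).sub hFF).add_const (β * (n ^ 2) ^ 2))
      exact this)
    (by
      have hFF : HasDerivAt (fun τ : ℝ => F1 s (σ + τ)) (F2 s σ) 0 := by
        have h0 : HasDerivAt (F1 s) (F2 s σ) (σ + 0) := by simpa using hF2 s hs σ
        exact (HasDerivAt.comp (0:ℝ) h0 ((hasDerivAt_id (0:ℝ)).const_add σ)).congr_deriv (by simp)
      exact ((hD2 s hs (a + σ • θ) θ).neg.sub (hD2 s hs (a - σ • θ) (-θ))).sub hFF)
    (by
      have hev2 : ∀ᶠ τ : ℝ in nhds 0, |σ + τ| < ρ := by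
        have hc : ContinuousAt (fun τ : ℝ => |σ + τ|) 0 := by fun_prop
        exact hc.eventually_lt continuousAt_const (by simpa using hσ)
      filter_upwards [hev2] with τ hτ2
      have := hmin s hsI a θ ρ (σ + τ) haR.le hθ hρ0.le hρR.le hτ2.le
      rw [← hN, ← hβdef] at this
      simp only [KK] at this
      rw [show a + (σ + τ) • θ = a + σ • θ + τ • θ by rw [add_smul]; abel,
        show a - (σ + τ) • θ = a - σ • θ + τ • (-θ) by rw [add_smul, smul_neg]; abel] at this
      simpa using this)
  -- rotations
  have rot : ∀ i, i ≠ i0 → ρ * (⟪p s (a + ρ • θ), b i⟫ - ⟪p s (a - ρ • θ), b i⟫)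
      = σ * (⟪p s (a + σ • θ), b i⟫ - ⟪p s (a - σ • θ), b i⟫) := by
    intro i hi
    have horth : ⟪θ, b i⟫ = 0 := by
      rw [← hb]; exact b.orthonormal.2 (Ne.symm hi)
    have hcur : ∀ r : ℝ, HasDerivAt
        (fun τ : ℝ => u s (a + r • (Real.cos τ • θ + Real.sin τ • b i)))
        (r * ⟪p s (a + r • θ), b i⟫) 0 := by
      intro r
      have h1 : HasDerivAt (fun τ : ℝ => a + r • (Real.cos τ • θ + Real.sin τ • b i))
          (r • b i) 0 := by
        have := ((((Real.hasDerivAt_cos 0).smul_const θ).add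
          ((Real.hasDerivAt_sin 0).smul_const (b i))).const_smul r).const_add a
        exact this.congr_deriv (by simp)
      have := curve_deriv (u s) (p s (a + r • θ)) _ (r • b i) 0 (by simpa using hp s hs (a + r • θ)) h1
      rwa [real_inner_smul_right] at this
    have hd := ((((hcur ρ).add (hcur (-ρ))).sub (hcur σ)).sub (hcur (-σ)))
    have hloc : IsLocalMin ((((fun τ : ℝ => u s (a + ρ • (Real.cos τ • θ + Real.sin τ • b i)))
      + fun τ : ℝ => u s (a + (-ρ) • (Real.cos τ • θ + Real.sin τ • b i)))
      - fun τ : ℝ => u s (a + σ • (Real.cos τ • θ + Real.sin τ • b i)))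
      - fun τ : ℝ => u s (a + (-σ) • (Real.cos τ • θ + Real.sin τ • b i))) 0 := by
      refine Filter.Eventually.of_forall fun τ => ?_
      have hnorm : ‖Real.cos τ • θ + Real.sin τ • b i‖ = 1 := by
        have : ‖Real.cos τ • θ + Real.sin τ • b i‖ ^ 2 = 1 := by
          rw [norm_add_sq_real, real_inner_smul_left, real_inner_smul_right, horth, norm_smul,
            norm_smul, hθ, b.norm_eq_one]
          simp
        have h0 := norm_nonneg (Real.cos τ • θ + Real.sin τ • b i)
        nlinarith
      have := hmin s hsI a (Real.cos τ • θ + Real.sin τ • b i) ρ σ haR.le hnorm hρ0.le hρR.le hσ.le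
      simp only [KK] at this
      simp only [Pi.add_apply, Pi.sub_apply, Real.cos_zero, Real.sin_zero, one_smul, zero_smul,
        add_zero, neg_smul, ← sub_eq_add_neg]
      linarith
    have := hloc.hasDerivAt_eq_zero hd
    simp only [neg_smul, ← sub_eq_add_neg] at this
    linarith
  -- time
  have htime := left_deriv_nonpos
    (fun s' => KK u F s' a θ ρ σ + ε * Real.exp (lam * s') * (1 + ‖a‖ ^ 2 + ρ ^ 2) ^ 2)
    ((∑ i, (D2 s (a + ρ • θ) (b i) - ⟪p s (a + ρ • θ), b i⟫ ^ 2)) / 2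
      + (∑ i, (D2 s (a - ρ • θ) (b i) - ⟪p s (a - ρ • θ), b i⟫ ^ 2)) / 2
      - (∑ i, (D2 s (a + σ • θ) (b i) - ⟪p s (a + σ • θ), b i⟫ ^ 2)) / 2
      - (∑ i, (D2 s (a - σ • θ) (b i) - ⟪p s (a - σ • θ), b i⟫ ^ 2)) / 2
      + Fs s ρ - Fs s σ + lam * (β * n ^ 4)) s hs.1
    (by
      have h1 := (((((hus s hs (a + ρ • θ) b).add (hus s hs (a - ρ • θ) b)).sub
        (hus s hs (a + σ • θ) b)).sub (hus s hs (a - σ • θ) b)).add (hFs s hs ρ)).sub (hFs s hs σ)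
      have h2 : HasDerivAt (fun s' => ε * Real.exp (lam * s') * (1 + ‖a‖ ^ 2 + ρ ^ 2) ^ 2)
          (lam * (β * n ^ 4)) s := by
        have := ((((hasDerivAt_id s).const_mul lam).exp).const_mul ε).mul_const
          ((1 + ‖a‖ ^ 2 + ρ ^ 2) ^ 2)
        refine this.congr_deriv ?_
        rw [← hN, hβdef]; simp; ring
      exact h1.add h2)
    (by
      intro s' hs'
      exact hmin s' ⟨hs'.1, hs'.2.trans hs.2⟩ a θ ρ σ haR.le hθ hρ0.le hρR.le hσ.le)
  have hpt : ∀ r : ℝ, |r| ≤ ρ → ‖p s (a + r • θ)‖ ≤ 3 * C * n := by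
    intro r hr
    refine (hpb s hs _).trans ?_
    have : ‖a + r • θ‖ ≤ 2 * n := by
      refine (norm_add_le _ _).trans ?_
      rw [norm_smul, hθ, Real.norm_eq_abs]; linarith
    calc C * (1 + ‖a + r • θ‖) ≤ C * (3 * n) := mul_le_mul_of_nonneg_left (by linarith) hC
      _ = _ := by ring
  have hm : ∀ r : ℝ, a - r • θ = a + (-r) • θ := fun r => by rw [neg_smul, sub_eq_add_neg]
  refine mp_core b i0 a (p s (a + ρ • θ)) (p s (a - ρ • θ)) (p s (a + σ • θ)) (p s (a - σ • θ))
    ρ σ β C n lam (fun i => D2 s (a + ρ • θ) (b i)) (fun i => D2 s (a - ρ • θ) (b i))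
    (fun i => D2 s (a + σ • θ) (b i)) (fun i => D2 s (a - σ • θ) (b i))
    (F1 s ρ) (F1 s σ) (F2 s ρ) (F2 s σ) (Fs s ρ) (Fs s σ) hβ hn hN hρ0 hσ hC
    (hpt _ (by rw [abs_of_pos hρ0])) (by rw [hm]; exact hpt _ (by rw [abs_neg, abs_of_pos hρ0]))
    (hpt _ hσ.le) (by rw [hm]; exact hpt _ (by rw [abs_neg]; exact hσ.le)) ?_ ?_ ?_ ?_ rot ?_ ?_ ?_
    (hFeq s hs ρ σ) htime hlam
  · refine (hF1b s hs ρ).trans ?_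
    rw [abs_of_pos hρ0]
    calc C * (1 + ρ) ≤ C * (2 * n) := mul_le_mul_of_nonneg_left (by linarith) hC
      _ = _ := by ring
  · intro i
    have := (lineA i).1
    simp only [zero_smul, add_zero] at this
    linear_combination this
  · have := lineR.1
    simp only [zero_smul, add_zero, inner_neg_right] at this
    rw [hb]
    linear_combination this
  · have := lineS.1
    simp only [zero_smul, add_zero, inner_neg_right] at this
    rw [hb]
    linear_combination -this
  · intro i _
    exact (lineA i).2
  · have := lineR.2
    rw [hD2n] at this
    rw [hb]
    linarith
  · have := lineS.2
    rw [hD2n] at this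
    rw [hb]
    linarith

set_option maxHeartbeats 1000000 in
lemma mp_main {d : ℕ} (i0 : Fin d) (T : ℝ)
    (u : ℝ → EuclideanSpace ℝ (Fin d) → ℝ)
    (p : ℝ → EuclideanSpace ℝ (Fin d) → EuclideanSpace ℝ (Fin d))
    (D2 : ℝ → EuclideanSpace ℝ (Fin d) → EuclideanSpace ℝ (Fin d) → ℝ)
    (F F1 F2 Fs : ℝ → ℝ → ℝ) (C : ℝ) (hC : 0 ≤ C)
    (hp : ∀ s ∈ Set.Ioc 0 T, ∀ x, HasGradientAt (u s) (p s x) x)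
    (hD2 : ∀ s ∈ Set.Ioc 0 T, ∀ x e,
      HasDerivAt (fun τ : ℝ => ⟪p s (x + τ • e), e⟫) (D2 s x e) 0)
    (hD2n : ∀ s x e, D2 s x (-e) = D2 s x e)
    (hus : ∀ s ∈ Set.Ioc 0 T, ∀ x,
      ∀ b : OrthonormalBasis (Fin d) ℝ (EuclideanSpace ℝ (Fin d)),
      HasDerivAt (fun s => u s x) ((∑ i, (D2 s x (b i) - ⟪p s x, b i⟫ ^ 2)) / 2) s)
    (hF1 : ∀ s ∈ Set.Ioc 0 T, ∀ ρ, HasDerivAt (F s) (F1 s ρ) ρ)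
    (hF2 : ∀ s ∈ Set.Ioc 0 T, ∀ ρ, HasDerivAt (F1 s) (F2 s ρ) ρ)
    (hFs : ∀ s ∈ Set.Ioc 0 T, ∀ ρ, HasDerivAt (fun s => F s ρ) (Fs s ρ) s)
    (hFeq : ∀ s ∈ Set.Ioc 0 T, ∀ ρ σ, Fs s ρ - F1 s ρ ^ 2 / 4 - F2 s ρ / 2
      = Fs s σ - F1 s σ ^ 2 / 4 - F2 s σ / 2)
    (hpb : ∀ s ∈ Set.Ioc 0 T, ∀ x, ‖p s x‖ ≤ C * (1 + ‖x‖))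
    (hF1b : ∀ s ∈ Set.Ioc 0 T, ∀ ρ, |F1 s ρ| ≤ C * (1 + |ρ|))
    (hub : ∀ s ∈ Set.Icc 0 T, ∀ x, |u s x| ≤ C * (1 + ‖x‖ ^ 2))
    (hFb : ∀ s ∈ Set.Icc 0 T, ∀ ρ, |F s ρ| ≤ C * (1 + ρ ^ 2))
    (huc : ContinuousOn (fun z : ℝ × EuclideanSpace ℝ (Fin d) => u z.1 z.2)
      (Set.Icc 0 T ×ˢ Set.univ))
    (hFc : ContinuousOn (fun z : ℝ × ℝ => F z.1 z.2) (Set.Icc 0 T ×ˢ Set.univ))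
    (h0 : ∀ a θ : EuclideanSpace ℝ (Fin d), ∀ ρ σ : ℝ, ‖θ‖ = 1 → 0 ≤ ρ → |σ| ≤ ρ →
      0 ≤ KK u F 0 a θ ρ σ)
    (hFeven : ∀ s ρ, F s (-ρ) = F s ρ)
    (s : ℝ) (hs : s ∈ Set.Icc 0 T) (a θ : EuclideanSpace ℝ (Fin d)) (ρ σ : ℝ) (hθ : ‖θ‖ = 1)
    (hρ : 0 ≤ ρ) (hσ : |σ| ≤ ρ) :
    0 ≤ KK u F s a θ ρ σ := by
  set lam : ℝ := 20 * C + 6 * d + 1 with hlam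
  have hlam0 : 0 ≤ lam := by positivity
  -- lower bound
  have lower : ∀ s ∈ Set.Icc 0 T, ∀ a θ : EuclideanSpace ℝ (Fin d), ∀ ρ σ : ℝ, ‖θ‖ = 1 → 0 ≤ ρ →
      |σ| ≤ ρ → -(24 * C * (1 + ‖a‖ ^ 2 + ρ ^ 2)) ≤ KK u F s a θ ρ σ := by
    intro s hs a θ ρ σ hθ hρ hσ
    have hσ2 : σ ^ 2 ≤ ρ ^ 2 := by rw [← sq_abs σ]; nlinarith [abs_nonneg σ]
    have hx : ∀ r : ℝ, r ^ 2 ≤ ρ ^ 2 →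
        |u s (a + r • θ)| ≤ C * (3 * (1 + ‖a‖ ^ 2 + ρ ^ 2)) := by
      intro r hr
      refine (hub s hs _).trans (mul_le_mul_of_nonneg_left ?_ hC)
      have h1 : ‖a + r • θ‖ ≤ ‖a‖ + |r| := by
        refine (norm_add_le _ _).trans ?_
        rw [norm_smul, hθ, Real.norm_eq_abs, mul_one]
      have h2 : ‖a + r • θ‖ ^ 2 ≤ (‖a‖ + |r|) ^ 2 := by gcongr
      have h3 : |r| ^ 2 = r ^ 2 := sq_abs r
      nlinarith [sq_nonneg (‖a‖ - |r|)]
    have hm : ∀ r : ℝ, a - r • θ = a + (-r) • θ := fun r => by rw [neg_smul, sub_eq_add_neg]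
    have b1 := abs_le.1 (hx ρ le_rfl)
    have b2 := abs_le.1 (hx (-ρ) (by rw [neg_sq]))
    have b3 := abs_le.1 (hx σ hσ2)
    have b4 := abs_le.1 (hx (-σ) (by rw [neg_sq]; exact hσ2))
    have b5 := abs_le.1 (hFb s hs ρ)
    have b6 := abs_le.1 (hFb s hs σ)
    have b7 : C * (1 + ρ ^ 2) ≤ C * (1 + ‖a‖ ^ 2 + ρ ^ 2) :=
      mul_le_mul_of_nonneg_left (by nlinarith [sq_nonneg ‖a‖]) hC
    have b8 : C * (1 + σ ^ 2) ≤ C * (1 + ‖a‖ ^ 2 + ρ ^ 2) :=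
      mul_le_mul_of_nonneg_left (by nlinarith [sq_nonneg ‖a‖]) hC
    have b9 : 0 ≤ C * (1 + ‖a‖ ^ 2 + ρ ^ 2) := by positivity
    unfold KK
    rw [hm, hm]
    linarith [b1.1, b2.1, b3.2, b4.2, b5.1, b6.2]
  suffices H : ∀ ε > 0, 0 ≤ KK u F s a θ ρ σ
      + ε * (Real.exp (lam * s) * (1 + ‖a‖ ^ 2 + ρ ^ 2) ^ 2) by
    by_contra hneg
    push Not at hneg
    set Q := Real.exp (lam * s) * (1 + ‖a‖ ^ 2 + ρ ^ 2) ^ 2 with hQ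
    have hQ0 : 0 < Q := by positivity
    have := H (-(KK u F s a θ ρ σ) / (2 * Q)) (by apply div_pos <;> linarith)
    have e : -(KK u F s a θ ρ σ) / (2 * Q) * Q = -(KK u F s a θ ρ σ) / 2 := by
      field_simp
    rw [e] at this
    linarith
  intro ε hε
  by_contra hneg
  push Not at hneg
  set R : ℝ := 24 * C / ε + 1 with hR
  have hR1 : 1 ≤ R := by rw [hR]; have : 0 ≤ 24 * C / ε := by positivity
                         linarith
  set Φ : ℝ × EuclideanSpace ℝ (Fin d) × EuclideanSpace ℝ (Fin d) × ℝ × ℝ → ℝ :=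
    fun z => KK u F z.1 z.2.1 z.2.2.1 z.2.2.2.1 z.2.2.2.2
      + ε * Real.exp (lam * z.1) * (1 + ‖z.2.1‖ ^ 2 + z.2.2.2.1 ^ 2) ^ 2 with hΦ
  have outside : ∀ s ∈ Set.Icc 0 T, ∀ a θ : EuclideanSpace ℝ (Fin d), ∀ ρ σ : ℝ, ‖θ‖ = 1 →
      0 ≤ ρ → |σ| ≤ ρ → KK u F s a θ ρ σ
      + ε * Real.exp (lam * s) * (1 + ‖a‖ ^ 2 + ρ ^ 2) ^ 2 < 0 → ‖a‖ < R ∧ ρ < R := by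
    intro s hs a θ ρ σ hθ hρ hσ hlt
    have hl := lower s hs a θ ρ σ hθ hρ hσ
    set N := 1 + ‖a‖ ^ 2 + ρ ^ 2 with hN
    have hN0 : 0 < N := by positivity
    have hexp : 1 ≤ Real.exp (lam * s) := Real.one_le_exp (mul_nonneg hlam0 hs.1)
    have h1 : ε * N ^ 2 ≤ ε * Real.exp (lam * s) * N ^ 2 := by
      have := mul_le_mul_of_nonneg_left hexp (by positivity : 0 ≤ ε * N ^ 2)
      linarith
    have h2 : ε * N * N < 24 * C * N := by nlinarith
    have h3 : ε * N < 24 * C := lt_of_mul_lt_mul_right h2 hN0.le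
    have h4 : N < R := by
      have : N < 24 * C / ε := by rw [lt_div_iff₀ hε]; linarith
      linarith
    constructor
    · by_contra hc; push Not at hc
      nlinarith [sq_nonneg ρ]
    · by_contra hc; push Not at hc
      nlinarith [sq_nonneg ‖a‖]
  set S : Set (ℝ × EuclideanSpace ℝ (Fin d) × EuclideanSpace ℝ (Fin d) × ℝ × ℝ) :=
    (Set.Icc 0 T ×ˢ Metric.closedBall 0 R ×ˢ Metric.sphere 0 1 ×ˢ Set.Icc 0 R ×ˢ Set.Icc (-R) R)
      ∩ {z | |z.2.2.2.2| ≤ z.2.2.2.1} with hS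
  have hSc : IsCompact S := by
    refine IsCompact.inter_right ?_ ?_
    · exact isCompact_Icc.prod ((isCompact_closedBall _ _).prod ((isCompact_sphere _ _).prod
        (isCompact_Icc.prod isCompact_Icc)))
    · exact isClosed_le (by fun_prop) (by fun_prop)
  have memS : ∀ s ∈ Set.Icc 0 T, ∀ a θ : EuclideanSpace ℝ (Fin d), ∀ ρ σ : ℝ, ‖a‖ ≤ R → ‖θ‖ = 1 →
      0 ≤ ρ → ρ ≤ R → |σ| ≤ ρ → (s, a, θ, ρ, σ) ∈ S := by
    intro s hs a θ ρ σ ha hθ hρ hρR hσ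
    have := abs_le.1 hσ
    refine ⟨⟨hs, by simpa using ha, by simpa using hθ, ⟨hρ, hρR⟩, ⟨by linarith, by linarith⟩⟩, hσ⟩
  have hneg' : Φ (s, a, θ, ρ, σ) < 0 := by
    simp only [hΦ]; rw [mul_assoc]; exact hneg
  have hin := outside s hs a θ ρ σ hθ hρ hσ hneg'
  have hz0 : (s, a, θ, ρ, σ) ∈ S := memS s hs a θ ρ σ hin.1.le hθ hρ hin.2.le hσ
  have hcont : ContinuousOn Φ S := by
    have cu : ∀ g : ℝ × EuclideanSpace ℝ (Fin d) × EuclideanSpace ℝ (Fin d) × ℝ × ℝ →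
        EuclideanSpace ℝ (Fin d), Continuous g → ContinuousOn (fun z => u z.1 (g z)) S := by
      intro g hg
      refine huc.comp (f := fun z : ℝ × EuclideanSpace ℝ (Fin d) × EuclideanSpace ℝ (Fin d) × ℝ × ℝ
        => (z.1, g z)) (by fun_prop) ?_
      intro z hz
      exact ⟨hz.1.1, trivial⟩
    have cF : ∀ g : ℝ × EuclideanSpace ℝ (Fin d) × EuclideanSpace ℝ (Fin d) × ℝ × ℝ →
        ℝ, Continuous g → ContinuousOn (fun z => F z.1 (g z)) S := by
      intro g hg
      refine hFc.comp (f := fun z : ℝ × EuclideanSpace ℝ (Fin d) × EuclideanSpace ℝ (Fin d) × ℝ × ℝ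
        => (z.1, g z)) (by fun_prop) ?_
      intro z hz
      exact ⟨hz.1.1, trivial⟩
    simp only [hΦ, KK]
    refine ContinuousOn.add (ContinuousOn.sub (ContinuousOn.add (ContinuousOn.sub (ContinuousOn.sub
      (ContinuousOn.add (cu _ ?_) (cu _ ?_)) (cu _ ?_)) (cu _ ?_)) (cF _ ?_)) (cF _ ?_)) ?_ <;> fun_prop
  obtain ⟨⟨s1, a1, θ1, ρ1, σ1⟩, hz1, hmin⟩ := hSc.exists_isMinOn ⟨_, hz0⟩ hcont
  have hz1neg : Φ (s1, a1, θ1, ρ1, σ1) < 0 := lt_of_le_of_lt (hmin hz0) hneg'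
  obtain ⟨⟨hs1, ha1, hθ1, hρ1, _⟩, hσ1⟩ := hz1
  simp only [Set.mem_setOf_eq] at hσ1
  simp only at hs1 ha1 hθ1 hρ1
  have hθ1' : ‖θ1‖ = 1 := by simpa using hθ1
  have hin1 := outside s1 hs1 a1 θ1 ρ1 σ1 hθ1' hρ1.1 hσ1 hz1neg
  have hpos : 0 ≤ ε * Real.exp (lam * s1) * (1 + ‖a1‖ ^ 2 + ρ1 ^ 2) ^ 2 := by positivity
  have hs1pos : 0 < s1 := by
    rcases hs1.1.lt_or_eq with h | h
    · exact h
    · exfalso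
      have h00 := h0 a1 θ1 ρ1 σ1 hθ1' hρ1.1 hσ1
      simp only [hΦ] at hz1neg
      rw [← h] at hz1neg hpos
      linarith
  have hσ1' : |σ1| < ρ1 := by
    rcases hσ1.lt_or_eq with h | h
    · exact h
    · exfalso
      have hK : KK u F s1 a1 θ1 ρ1 σ1 = 0 := by
        unfold KK
        rcases abs_choice σ1 with h' | h'
        · have : σ1 = ρ1 := by rw [← h, h']
          rw [this]; ring
        · have : σ1 = -ρ1 := by rw [← h, h']; ring
          rw [this, hFeven, neg_smul, ← sub_eq_add_neg, sub_neg_eq_add]; ring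
      simp only [hΦ] at hz1neg
      rw [hK] at hz1neg
      linarith
  refine mp_min i0 T u p D2 F F1 F2 Fs C hC hp hD2 hD2n hus hF1 hF2 hFs hFeq hpb hF1b ε lam R hε hlam
    s1 a1 θ1 ρ1 σ1 ⟨hs1pos, hs1.2⟩ hin1.1 hθ1' (lt_of_le_of_lt (abs_nonneg _) hσ1') hin1.2 hσ1' ?_
  intro s' hs' a' θ' ρ' σ' ha' hθ' hρ' hρR' hσ'
  exact hmin (memS s' hs' a' θ' ρ' σ' ha' hθ' hρ' hρR' hσ')

noncomputable def ww {d : ℕ} (z : EuclideanSpace ℝ (Fin d)) : ℝ := Real.exp (-‖z‖ ^ 2 / 2)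

lemma ww_pos {d : ℕ} (z : EuclideanSpace ℝ (Fin d)) : 0 < ww z := Real.exp_pos _

lemma ww_cont {d : ℕ} : Continuous (ww : EuclideanSpace ℝ (Fin d) → ℝ) := by
  unfold ww; fun_prop

lemma gauss_int {d : ℕ} (b : ℝ) (hb : 0 < b) :
    Integrable (fun z : EuclideanSpace ℝ (Fin d) => Real.exp (-b * ‖z‖ ^ 2)) := by
  have := (GaussianFourier.integrable_cexp_neg_mul_sq_norm_add (V := EuclideanSpace ℝ (Fin d))
    (b := (b : ℂ)) (by simpa) 0 0).norm
  refine this.congr (Filter.Eventually.of_forall fun z => ?_)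
  simp only [Complex.norm_exp]
  congr 1
  simp [← Complex.ofReal_pow]

lemma ww_int2 {d : ℕ} :
    Integrable (fun z : EuclideanSpace ℝ (Fin d) => ww z * (1 + ‖z‖ ^ 2)) := by
  refine ((gauss_int (d := d) (1/4) (by norm_num)).const_mul 5).mono' ?_ ?_
  · exact (ww_cont.mul (by fun_prop)).aestronglyMeasurable
  · refine Filter.Eventually.of_forall fun z => ?_
    rw [Real.norm_of_nonneg (mul_nonneg (ww_pos z).le (by positivity))]
    have h1 : ww z = Real.exp (-(1/4) * ‖z‖ ^ 2) * Real.exp (-(1/4) * ‖z‖ ^ 2) := by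
      rw [← Real.exp_add, ww]; congr 1; ring
    have h2 : Real.exp (-(1/4) * ‖z‖ ^ 2) * (1 + ‖z‖ ^ 2) ≤ 5 := by
      have h3 : Real.exp (-(1/4) * ‖z‖ ^ 2) * Real.exp ((1/4) * ‖z‖ ^ 2) = 1 := by
        rw [← Real.exp_add]; simp
      have h4 := Real.add_one_le_exp ((1/4) * ‖z‖ ^ 2)
      have h5 := Real.exp_pos (-(1/4) * ‖z‖ ^ 2)
      have h6 : Real.exp (-(1/4) * ‖z‖ ^ 2) ≤ 1 := Real.exp_le_one_iff.2 (by nlinarith [sq_nonneg ‖z‖])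
      nlinarith [mul_le_mul_of_nonneg_left h4 h5.le]
    rw [h1, mul_assoc]
    nlinarith [mul_le_mul_of_nonneg_left h2 (Real.exp_pos (-(1/4) * ‖z‖ ^ 2)).le]

lemma ww_dom {d : ℕ} {G : Type*} [NormedAddCommGroup G] [NormedSpace ℝ G] (C : ℝ)
    (k : EuclideanSpace ℝ (Fin d) → G) (hk : Continuous k) (hb : ∀ z, ‖k z‖ ≤ C * (1 + ‖z‖ ^ 2)) :
    Integrable (fun z : EuclideanSpace ℝ (Fin d) => ww z • k z) := by
  refine (ww_int2.const_mul C).mono' (ww_cont.smul hk).aestronglyMeasurable ?_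
  refine Filter.Eventually.of_forall fun z => ?_
  rw [norm_smul, Real.norm_of_nonneg (ww_pos z).le]
  nlinarith [mul_le_mul_of_nonneg_left (hb z) (ww_pos z).le]

lemma ww_int {d : ℕ} : Integrable (ww : EuclideanSpace ℝ (Fin d) → ℝ) := by
  have := ww_dom (d := d) 1 (fun _ => (1:ℝ)) continuous_const
    (by intro z; simp)
  simpa using this

noncomputable def PP {d : ℕ} {G : Type*} [NormedAddCommGroup G] [NormedSpace ℝ G]
    (k : EuclideanSpace ℝ (Fin d) → G) (s : ℝ) (x : EuclideanSpace ℝ (Fin d)) : G :=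
  ∫ z, ww z • k (x + Real.sqrt s • z)

lemma PP_int {d : ℕ} {G : Type*} [NormedAddCommGroup G] [NormedSpace ℝ G] (C : ℝ)
    (k : EuclideanSpace ℝ (Fin d) → G) (hk : Continuous k) (hb : ∀ z, ‖k z‖ ≤ C) (s : ℝ)
    (x : EuclideanSpace ℝ (Fin d)) :
    Integrable (fun z => ww z • k (x + Real.sqrt s • z)) := by
  refine ww_dom C _ (by fun_prop) fun z => (hb _).trans ?_
  have : 0 ≤ C := (norm_nonneg _).trans (hb 0)
  nlinarith [sq_nonneg ‖z‖]

lemma PP_cont {d : ℕ} {G : Type*} [NormedAddCommGroup G] [NormedSpace ℝ G] (C : ℝ)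
    (k : EuclideanSpace ℝ (Fin d) → G) (hk : Continuous k) (hb : ∀ z, ‖k z‖ ≤ C) :
    Continuous (fun q : ℝ × EuclideanSpace ℝ (Fin d) => PP k q.1 q.2) := by
  unfold PP
  refine continuous_of_dominated (bound := fun z => C * ww z) ?_ ?_ (ww_int.const_mul C) ?_
  · intro q
    exact (PP_int C k hk hb q.1 q.2).aestronglyMeasurable
  · intro q
    refine Filter.Eventually.of_forall fun z => ?_
    rw [norm_smul, Real.norm_of_nonneg (ww_pos z).le]
    nlinarith [mul_le_mul_of_nonneg_left (hb (q.2 + Real.sqrt q.1 • z)) (ww_pos z).le]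
  · refine Filter.Eventually.of_forall fun z => ?_
    fun_prop

lemma PP_fderiv {d : ℕ} {G : Type*} [NormedAddCommGroup G] [NormedSpace ℝ G] (C : ℝ)
    (k : EuclideanSpace ℝ (Fin d) → G) (k' : EuclideanSpace ℝ (Fin d) → EuclideanSpace ℝ (Fin d) →L[ℝ] G)
    (hb : ∀ z, ‖k z‖ ≤ C) (hd : ∀ x, HasFDerivAt k (k' x) x) (hk' : Continuous k')
    (hb' : ∀ z, ‖k' z‖ ≤ C) (s : ℝ) (x : EuclideanSpace ℝ (Fin d)) :
    HasFDerivAt (PP k s) (PP k' s x) x := by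
  have hk : Continuous k := continuous_iff_continuousAt.2 fun x => (hd x).continuousAt
  unfold PP
  refine hasFDerivAt_integral_of_dominated_of_fderiv_le (s := Set.univ) (bound := fun z => C * ww z)
    (F' := fun x z => ww z • k' (x + Real.sqrt s • z))
    Filter.univ_mem ?_ (PP_int C k hk hb s x) (PP_int C k' hk' hb' s x).aestronglyMeasurable ?_
    (ww_int.const_mul C) ?_
  · exact Filter.Eventually.of_forall fun y => (PP_int C k hk hb s y).aestronglyMeasurable
  · refine Filter.Eventually.of_forall fun z y _ => ?_
    rw [norm_smul, Real.norm_of_nonneg (ww_pos z).le]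
    nlinarith [mul_le_mul_of_nonneg_left (hb' (y + Real.sqrt s • z)) (ww_pos z).le]
  · refine Filter.Eventually.of_forall fun z y _ => ?_
    refine HasFDerivAt.const_smul ?_ _
    exact (hasFDerivAt_comp_add_right (Real.sqrt s • z)).2 (hd _)

lemma PP_sderiv {d : ℕ} (C : ℝ)
    (k : EuclideanSpace ℝ (Fin d) → ℝ) (k' : EuclideanSpace ℝ (Fin d) → EuclideanSpace ℝ (Fin d) →L[ℝ] ℝ)
    (hb : ∀ z, ‖k z‖ ≤ C) (hd : ∀ x, HasFDerivAt k (k' x) x) (hk' : Continuous k')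
    (hb' : ∀ z, ‖k' z‖ ≤ C) (s : ℝ) (hs : 0 < s) (x : EuclideanSpace ℝ (Fin d)) :
    HasDerivAt (fun s => PP k s x)
      (∫ z, ww z • (1 / (2 * Real.sqrt s) * k' (x + Real.sqrt s • z) z)) s := by
  have hk : Continuous k := continuous_iff_continuousAt.2 fun x => (hd x).continuousAt
  have hC : 0 ≤ C := (norm_nonneg _).trans (hb 0)
  unfold PP
  refine (hasDerivAt_integral_of_dominated_loc_of_deriv_le (s := Set.Ioi (s / 2))
    (bound := fun z => (C / (2 * Real.sqrt (s/2))) * (ww z * (1 + ‖z‖ ^ 2)))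
    (F' := fun s z => ww z • (1 / (2 * Real.sqrt s) * k' (x + Real.sqrt s • z) z))
    (Ioi_mem_nhds (by linarith)) ?_ (PP_int C k hk hb s x) ?_ ?_
    (ww_int2.const_mul _) ?_).2
  · exact Filter.Eventually.of_forall fun s => (PP_int C k hk hb s x).aestronglyMeasurable
  · refine (ww_cont.smul (continuous_const.mul ?_)).aestronglyMeasurable
    exact (hk'.comp (by fun_prop)).clm_apply continuous_id
  · refine Filter.Eventually.of_forall fun z τ hτ => ?_
    have hτ' : s / 2 < τ := hτ
    have h1 : 0 < Real.sqrt (s / 2) := Real.sqrt_pos.2 (by linarith)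
    have h2 : Real.sqrt (s / 2) ≤ Real.sqrt τ := Real.sqrt_le_sqrt hτ'.le
    rw [norm_smul, Real.norm_of_nonneg (ww_pos z).le, norm_mul, Real.norm_of_nonneg (by positivity)]
    have h3 : ‖k' (x + Real.sqrt τ • z) z‖ ≤ C * (1 + ‖z‖ ^ 2) := by
      refine ((k' _).le_opNorm z).trans ?_
      refine mul_le_mul (hb' _) ?_ (norm_nonneg _) hC
      nlinarith [sq_nonneg (‖z‖ - 1)]
    calc ww z * (1 / (2 * Real.sqrt τ) * ‖k' (x + Real.sqrt τ • z) z‖)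
        ≤ ww z * (1 / (2 * Real.sqrt (s/2)) * (C * (1 + ‖z‖ ^ 2))) := by
          gcongr
          exact (ww_pos z).le
      _ = _ := by ring
  · refine Filter.Eventually.of_forall fun z τ hτ => ?_
    have hτ' : s / 2 < τ := hτ
    refine HasDerivAt.const_smul (ww z) ?_
    have h1 : HasDerivAt (fun τ => x + Real.sqrt τ • z) ((1 / (2 * Real.sqrt τ)) • z) τ :=
      ((Real.hasDerivAt_sqrt (by linarith : τ ≠ 0)).smul_const z).const_add x
    exact ((hd _).comp_hasDerivAt τ h1).congr_deriv (by simp)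

lemma ww_fderiv {d : ℕ} (z : EuclideanSpace ℝ (Fin d)) :
    HasFDerivAt ww (-(ww z) • innerSL ℝ z) z := by
  have h1 : HasFDerivAt (fun z : EuclideanSpace ℝ (Fin d) => ‖z‖ ^ 2) (2 • innerSL ℝ z) z :=
    (hasStrictFDerivAt_norm_sq z).hasFDerivAt
  have h2 : HasFDerivAt (fun z : EuclideanSpace ℝ (Fin d) => -‖z‖ ^ 2 / 2)
      (-innerSL ℝ z) z := by
    have := h1.const_mul (-1/2 : ℝ)
    convert! this using 1
    · ext y; ring
    · ext y; simp; ring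
  have h3 := h2.exp
  unfold ww
  convert! h3 using 1
  ext y; simp

/-- Gaussian integration by parts. -/
lemma ww_ibp {d : ℕ} (C : ℝ)
    (k : EuclideanSpace ℝ (Fin d) → ℝ) (k' : EuclideanSpace ℝ (Fin d) → EuclideanSpace ℝ (Fin d) →L[ℝ] ℝ)
    (hd : ∀ x, HasFDerivAt k (k' x) x) (hk' : Continuous k')
    (e : EuclideanSpace ℝ (Fin d))
    (hb : ∀ z, ‖k z‖ ≤ C * (1 + ‖z‖)) (hb' : ∀ z, ‖k' z e‖ ≤ C * (1 + ‖z‖ ^ 2))  :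
    ∫ z, ww z * (⟪z, e⟫ * k z) = ∫ z, ww z * k' z e := by
  have hk : Continuous k := continuous_iff_continuousAt.2 fun x => (hd x).continuousAt
  have hC : 0 ≤ C := by have := (norm_nonneg _).trans (hb 0); simpa using this
  have key := integral_bilinear_hasFDerivAt_right_eq_neg_left_of_integrable
    (μ := (volume : Measure (EuclideanSpace ℝ (Fin d)))) (f := ww) (f' := fun z => -(ww z) • innerSL ℝ z)
    (g := k) (g' := k') (v := e) (B := ContinuousLinearMap.mul ℝ ℝ) ?_ ?_ ?_
    (fun z _ => ww_fderiv z) (fun z _ => hd z)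
  · simp only [ContinuousLinearMap.mul_apply'] at key
    rw [key, ← integral_neg]
    congr 1; ext z
    simp; ring
  · have := ww_dom (C * ‖e‖ * 3) (fun z => -(⟪z, e⟫ * k z)) (by fun_prop) (fun z => by
      rw [norm_neg, norm_mul]
      calc ‖⟪z, e⟫‖ * ‖k z‖ ≤ (‖z‖ * ‖e‖) * (C * (1 + ‖z‖)) :=
            mul_le_mul (norm_inner_le_norm z e) (hb z) (norm_nonneg _) (by positivity)
        _ = (C * ‖e‖) * (‖z‖ * (1 + ‖z‖)) := by ring
        _ ≤ (C * ‖e‖) * (3 * (1 + ‖z‖ ^ 2)) :=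
            mul_le_mul_of_nonneg_left (by nlinarith [sq_nonneg (‖z‖ - 1)]) (by positivity)
        _ = _ := by ring)
    refine this.congr (Filter.Eventually.of_forall fun z => ?_)
    simp; ring
  · simpa using ww_dom C (fun z => k' z e) (by fun_prop) hb'
  · have := ww_dom (C * 2) k hk (fun z => (hb z).trans (by
      rw [mul_assoc]; gcongr; nlinarith [sq_nonneg (‖z‖ - 1)]))
    simpa using this

lemma PP_apply {d : ℕ} {H : Type*} [NormedAddCommGroup H] [NormedSpace ℝ H] [CompleteSpace H] (C : ℝ)
    (k : EuclideanSpace ℝ (Fin d) → EuclideanSpace ℝ (Fin d) →L[ℝ] H) (hk : Continuous k)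
    (hb : ∀ z, ‖k z‖ ≤ C) (s : ℝ) (x e : EuclideanSpace ℝ (Fin d)) :
    PP k s x e = PP (fun y => k y e) s x := by
  unfold PP
  rw [ContinuousLinearMap.integral_apply (PP_int C k hk hb s x)]
  rfl

lemma heat_eq {d : ℕ} (C : ℝ)
    (h : EuclideanSpace ℝ (Fin d) → ℝ) (h1 : EuclideanSpace ℝ (Fin d) → EuclideanSpace ℝ (Fin d) →L[ℝ] ℝ)
    (h2 : EuclideanSpace ℝ (Fin d) → EuclideanSpace ℝ (Fin d) →L[ℝ] EuclideanSpace ℝ (Fin d) →L[ℝ] ℝ)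
    (hb : ∀ z, ‖h z‖ ≤ C) (hd : ∀ x, HasFDerivAt h (h1 x) x) 
    (hb1 : ∀ z, ‖h1 z‖ ≤ C) (hd1 : ∀ x, HasFDerivAt h1 (h2 x) x)
    (hb2 : ∀ z, ‖h2 z‖ ≤ C) (hc2 : Continuous h2)
    (s : ℝ) (hs : 0 < s) (x : EuclideanSpace ℝ (Fin d))
    (b : OrthonormalBasis (Fin d) ℝ (EuclideanSpace ℝ (Fin d))) :
    HasDerivAt (fun s => PP h s x) ((∑ i, PP h2 s x (b i) (b i)) / 2) s := by
  have hc1 : Continuous h1 := continuous_iff_continuousAt.2 fun x => (hd1 x).continuousAt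
  have hC : 0 ≤ C := (norm_nonneg _).trans (hb 0)
  have hss : 0 < Real.sqrt s := Real.sqrt_pos.2 hs
  refine (PP_sderiv C h h1 hb hd hc1 hb1 s hs x).congr_deriv ?_
  have e1 : ∀ z, ww z • (1 / (2 * Real.sqrt s) * h1 (x + Real.sqrt s • z) z)
      = ∑ i, (1 / (2 * Real.sqrt s)) * (ww z * (⟪z, b i⟫ * h1 (x + Real.sqrt s • z) (b i))) := by
    intro z
    have : h1 (x + Real.sqrt s • z) z = ∑ i, ⟪z, b i⟫ * h1 (x + Real.sqrt s • z) (b i) := by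
      generalize h1 (x + Real.sqrt s • z) = l
      conv_lhs => rw [← b.sum_repr' z]
      simp [real_inner_comm]
    rw [this, smul_eq_mul, Finset.mul_sum, Finset.mul_sum]
    refine Finset.sum_congr rfl fun i _ => by ring
  have hbd : ∀ z e, ‖h1 z e‖ ≤ C * ‖e‖ := fun z e =>
    ((h1 z).le_opNorm e).trans (mul_le_mul_of_nonneg_right (hb1 z) (norm_nonneg _))
  have hintg : ∀ i, Integrable (fun z => (1 / (2 * Real.sqrt s)) *
      (ww z * (⟪z, b i⟫ * h1 (x + Real.sqrt s • z) (b i)))) := by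
    intro i
    refine Integrable.const_mul ?_ _
    refine ww_dom C (fun z => ⟪z, b i⟫ * h1 (x + Real.sqrt s • z) (b i)) ?_ ?_
    · fun_prop
    · intro z
      rw [norm_mul]
      have q1 := norm_inner_le_norm (𝕜 := ℝ) z (b i)
      have q2 := hbd (x + Real.sqrt s • z) (b i)
      rw [b.norm_eq_one, mul_one] at q1 q2
      calc _ ≤ ‖z‖ * C := mul_le_mul q1 q2 (norm_nonneg _) (norm_nonneg _)
        _ ≤ _ := by nlinarith [mul_le_mul_of_nonneg_left (show ‖z‖ ≤ 1 + ‖z‖ ^ 2 by nlinarith [sq_nonneg (‖z‖ - 1)]) hC]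
  simp_rw [e1]
  rw [integral_finsetSum _ (fun i _ => hintg i), Finset.sum_div]
  refine Finset.sum_congr rfl fun i _ => ?_
  rw [integral_const_mul]
  have ib := ww_ibp (d := d) (C * (1 + Real.sqrt s))
    (fun z => h1 (x + Real.sqrt s • z) (b i))
    (fun z => Real.sqrt s • (h2 (x + Real.sqrt s • z)).flip (b i)) ?_ ?_ (b i) ?_ ?_
  · rw [ib, PP_apply C h2 hc2 hb2, PP_apply C]
    · unfold PP
      have : ∀ z, ww z * ((Real.sqrt s • (h2 (x + Real.sqrt s • z)).flip (b i)) (b i)) =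
         Real.sqrt s * (ww z • h2 (x + Real.sqrt s • z) (b i) (b i)) := by
        intro z; simp; ring
      simp_rw [this]
      rw [integral_const_mul]
      field_simp
    · fun_prop
    · intro z
      refine ((h2 z).le_opNorm _).trans ?_
      rw [b.norm_eq_one, mul_one]; exact hb2 z
  · intro z
    have q1 : HasFDerivAt (fun z : EuclideanSpace ℝ (Fin d) => x + Real.sqrt s • z)
      (Real.sqrt s • ContinuousLinearMap.id ℝ _) z :=
      ((hasFDerivAt_id z).const_smul (Real.sqrt s)).const_add x
    have q2 := ((hd1 (x + Real.sqrt s • z)).comp z q1).clm_apply (hasFDerivAt_const (b i) z)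
    refine q2.congr_fderiv ?_
    ext e; simp
  · have : Continuous fun z => h2 (x + Real.sqrt s • z) := by fun_prop
    have q := (ContinuousLinearMap.flipₗᵢ ℝ (EuclideanSpace ℝ (Fin d)) (EuclideanSpace ℝ (Fin d))
      ℝ).continuous.comp this
    have q2 : Continuous fun z => (h2 (x + Real.sqrt s • z)).flip (b i) :=
      q.clm_apply continuous_const
    exact q2.const_smul (Real.sqrt s)
  · intro z
    have q2 := hbd (x + Real.sqrt s • z) (b i)
    rw [b.norm_eq_one, mul_one] at q2
    refine q2.trans ?_
    rw [mul_assoc]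
    exact le_mul_of_one_le_right hC (by nlinarith [norm_nonneg z])
  · intro z
    have q2 := ((h2 (x + Real.sqrt s • z)) (b i)).le_opNorm (b i)
    have q3 := (h2 (x + Real.sqrt s • z)).le_opNorm (b i)
    rw [b.norm_eq_one, mul_one] at q2 q3
    have q4 := (q2.trans q3).trans (hb2 _)
    simp only [smul_apply, ContinuousLinearMap.flip_apply, norm_smul,
      Real.norm_of_nonneg hss.le]
    calc _ ≤ Real.sqrt s * C := by gcongr
      _ ≤ _ := by
        rw [mul_comm, mul_assoc]
        exact mul_le_mul_of_nonneg_left (by nlinarith [sq_nonneg ‖z‖]) hC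

lemma tanh_le_one' (x : ℝ) : Real.tanh x ≤ 1 := (Real.tanh_lt_one x).le

/-- Semi-convexity gives quadratic growth. -/
lemma U_lower {d : ℕ} (U : EuclideanSpace ℝ (Fin d) → ℝ)
    (U1 : EuclideanSpace ℝ (Fin d) → EuclideanSpace ℝ (Fin d) →L[ℝ] ℝ)
    (hd : ∀ x, HasFDerivAt U (U1 x) x) (α m : ℝ) (hm : 0 < m)
    (hc : ∀ x y, α * ‖x - y‖ ^ 2 - ‖x - y‖ * (2 * m * Real.tanh (m * ‖x - y‖ / 2))
      ≤ (U1 x - U1 y) (x - y)) (y : EuclideanSpace ℝ (Fin d)) :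
    U 0 - (‖U1 0‖ + 2 * m) * ‖y‖ + α / 2 * ‖y‖ ^ 2 ≤ U y := by
  have hder : ∀ τ : ℝ, HasDerivAt (fun τ : ℝ => U (τ • y) + τ * ((‖U1 0‖ + 2 * m) * ‖y‖) - α / 2 * ‖y‖ ^ 2 * τ ^ 2)
      (U1 (τ • y) y + ((‖U1 0‖ + 2 * m) * ‖y‖) - α * ‖y‖ ^ 2 * τ) τ := by
    intro τ
    have h1 : HasDerivAt (fun τ : ℝ => τ • y) y τ := by
      simpa using (hasDerivAt_id τ).smul_const y
    have h2 := (hd (τ • y)).comp_hasDerivAt τ h1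
    have h3 := (h2.add ((hasDerivAt_id τ).mul_const ((‖U1 0‖ + 2 * m) * ‖y‖))).sub
      ((hasDerivAt_pow 2 τ).const_mul (α / 2 * ‖y‖ ^ 2))
    exact h3.congr_deriv (by simp; ring)
  have hmono := monotoneOn_of_deriv_nonneg (convex_Icc (0:ℝ) 1)
    (f := fun τ : ℝ => U (τ • y) + τ * ((‖U1 0‖ + 2 * m) * ‖y‖) - α / 2 * ‖y‖ ^ 2 * τ ^ 2)
    (fun τ _ => (hder τ).continuousAt.continuousWithinAt)
    (fun τ _ => (hder τ).differentiableAt.differentiableWithinAt) (by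
      intro τ hτ
      rw [(hder τ).deriv]
      rw [interior_Icc] at hτ
      have hτ0 : 0 < τ := hτ.1
      have k1 := hc (τ • y) 0
      simp only [sub_zero, map_smul, sub_apply, norm_smul, Real.norm_of_nonneg hτ0.le, smul_eq_mul] at k1
      have k2 : (U1 0) y ≥ -(‖U1 0‖ * ‖y‖) := by
        have := (U1 0).le_opNorm y
        exact neg_le_of_abs_le this
      have k3 := tanh_le_one' (m * (τ * ‖y‖) / 2)
      have k4 : τ * ‖y‖ * (2 * m * Real.tanh (m * (τ * ‖y‖) / 2)) ≤ τ * ‖y‖ * (2 * m) := by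
        refine mul_le_mul_of_nonneg_left ?_ (by positivity)
        nlinarith
      have k5 : τ * (α * τ * ‖y‖ ^ 2 - ‖y‖ * (2 * m)) ≤ τ * ((U1 (τ • y)) y - (U1 0) y) := by nlinarith
      have k6 := le_of_mul_le_mul_left k5 hτ0
      nlinarith)
  have := hmono (Set.left_mem_Icc.2 zero_le_one) (Set.right_mem_Icc.2 zero_le_one) zero_le_one
  simp at this
  linarith

lemma h_decay {d : ℕ} (U : EuclideanSpace ℝ (Fin d) → ℝ) (c C1 α : ℝ) (hα : 0 < α)
    (hU : ∀ y, c - C1 * ‖y‖ + α / 2 * ‖y‖ ^ 2 ≤ U y) :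
    ∃ B : ℝ, 0 < B ∧ ∀ y, Real.exp (-U y) * (1 + ‖y‖) ^ 2 ≤ B := by
  refine ⟨2 * Real.exp (-c + 1 + (C1 + 1) ^ 2 / (2 * α)), by positivity, fun y => ?_⟩
  have h1 : (1 + ‖y‖) ^ 2 ≤ 2 * Real.exp (1 + ‖y‖) := by
    have := Real.quadratic_le_exp_of_nonneg (show 0 ≤ 1 + ‖y‖ by positivity)
    nlinarith [norm_nonneg y]
  have h2 : Real.exp (-U y) * Real.exp (1 + ‖y‖) ≤ Real.exp (-c + 1 + (C1 + 1) ^ 2 / (2 * α)) := by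
    rw [← Real.exp_add, Real.exp_le_exp]
    have h3 := hU y
    have h4 : (C1 + 1) * ‖y‖ - α / 2 * ‖y‖ ^ 2 ≤ (C1 + 1) ^ 2 / (2 * α) := by
      rw [le_div_iff₀ (by positivity)]
      nlinarith [sq_nonneg (α * ‖y‖ - (C1 + 1))]
    linarith
  calc _ ≤ Real.exp (-U y) * (2 * Real.exp (1 + ‖y‖)) := by gcongr
    _ ≤ _ := by linarith

lemma norm_smul_sub_le' {V : Type*} [NormedAddCommGroup V] [NormedSpace ℝ V] (c : ℝ) (hc : 0 ≤ c)
    (a b : V) : ‖c • (a - b)‖ ≤ c * (‖a‖ + ‖b‖) := by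
  rw [norm_smul, Real.norm_of_nonneg hc]
  exact mul_le_mul_of_nonneg_left (norm_sub_le _ _) hc

/-- Package: `exp (-U)` has bounded derivatives. -/
lemma h_data {d : ℕ} (U : EuclideanSpace ℝ (Fin d) → ℝ)
    (U1 : EuclideanSpace ℝ (Fin d) → EuclideanSpace ℝ (Fin d) →L[ℝ] ℝ)
    (U2 : EuclideanSpace ℝ (Fin d) → EuclideanSpace ℝ (Fin d) →L[ℝ] EuclideanSpace ℝ (Fin d) →L[ℝ] ℝ)
    (hd : ∀ x, HasFDerivAt U (U1 x) x) (hd1 : ∀ x, HasFDerivAt U1 (U2 x) x)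
    (α m L : ℝ) (hα : 0 < α) (hm : 0 < m) (hL0 : 0 ≤ L)
    (hL : ∀ x y, ‖U1 x - U1 y‖ ≤ L * ‖x - y‖)
    (hc : ∀ x y, α * ‖x - y‖ ^ 2 - ‖x - y‖ * (2 * m * Real.tanh (m * ‖x - y‖ / 2))
      ≤ (U1 x - U1 y) (x - y)) :
    ∃ C : ℝ, (∀ z, ‖Real.exp (-U z)‖ ≤ C) ∧ (∀ z, ‖-(Real.exp (-U z)) • U1 z‖ ≤ C) ∧
      (∀ z, ‖Real.exp (-U z) • ((U1 z).smulRight (U1 z) - U2 z)‖ ≤ C) := by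
  obtain ⟨B, hB, hBd⟩ := h_decay U _ _ α hα (U_lower U U1 hd α m hm hc)
  set A := ‖U1 0‖ + L + 1 with hA
  have hA1 : 1 ≤ A := by have := norm_nonneg (U1 0); linarith
  have g1 : ∀ z, ‖U1 z‖ ≤ A * (1 + ‖z‖) := by
    intro z
    have e := hL z 0
    rw [sub_zero] at e
    have : ‖U1 z‖ ≤ ‖U1 z - U1 0‖ + ‖U1 0‖ := by simpa using norm_add_le (U1 z - U1 0) (U1 0)
    nlinarith [norm_nonneg z, norm_nonneg (U1 0), mul_nonneg (norm_nonneg z) (norm_nonneg (U1 0))]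
  have g2 : ∀ z, ‖U2 z‖ ≤ L := by
    intro z
    refine (hd1 z).le_of_lip' hL0 (Filter.Eventually.of_forall fun x => hL x z)
  have key : ∀ z, Real.exp (-U z) * (1 + ‖z‖) ^ 2 * A ^ 2 ≤ B * A ^ 2 := fun z =>
    mul_le_mul_of_nonneg_right (hBd z) (by positivity)
  have one : ∀ z : EuclideanSpace ℝ (Fin d), 1 ≤ 1 + ‖z‖ := fun z => by linarith [norm_nonneg z]
  refine ⟨2 * (B * A ^ 2), fun z => ?_, fun z => ?_, fun z => ?_⟩
  · rw [Real.norm_of_nonneg (Real.exp_pos _).le]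
    have e1 : 1 ≤ ((1 + ‖z‖) * A) ^ 2 := one_le_pow₀ (one_le_mul_of_one_le_of_one_le (one z) hA1)
    have := mul_le_mul_of_nonneg_left e1 (Real.exp_pos (-U z)).le
    have k := key z
    have : 0 < B * A ^ 2 := by positivity
    nlinarith
  · rw [norm_smul, norm_neg, Real.norm_of_nonneg (Real.exp_pos _).le]
    have e0 : 1 ≤ (1 + ‖z‖) * A := one_le_mul_of_one_le_of_one_le (one z) hA1
    have e1 : ‖U1 z‖ ≤ ((1 + ‖z‖) * A) ^ 2 := by nlinarith [g1 z]
    have := mul_le_mul_of_nonneg_left e1 (Real.exp_pos (-U z)).le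
    have k := key z
    have : 0 < B * A ^ 2 := by positivity
    nlinarith
  · have e0 : 1 ≤ (1 + ‖z‖) * A := one_le_mul_of_one_le_of_one_le (one z) hA1
    have e2 : ‖(U1 z).smulRight (U1 z)‖ + ‖U2 z‖ ≤ 2 * ((1 + ‖z‖) * A) ^ 2 := by
      rw [ContinuousLinearMap.norm_smulRight_apply]
      have : L ≤ A := by linarith [norm_nonneg (U1 0)]
      have f1 : ‖U1 z‖ * ‖U1 z‖ ≤ ((1 + ‖z‖) * A) ^ 2 := by
        rw [← pow_two]; exact pow_le_pow_left₀ (norm_nonneg _) (by linarith [g1 z]) 2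
      have f2 : A ≤ (1 + ‖z‖) * A := le_mul_of_one_le_left (by linarith) (one z)
      nlinarith [g2 z]
    have := mul_le_mul_of_nonneg_left e2 (Real.exp_pos (-U z)).le
    have k := key z
    have e3 := norm_smul_sub_le' (Real.exp (-U z)) (Real.exp_pos _).le ((U1 z).smulRight (U1 z)) (U2 z)
    refine e3.trans ?_
    nlinarith

lemma h_deriv1 {d : ℕ} (U : EuclideanSpace ℝ (Fin d) → ℝ)
    (U1 : EuclideanSpace ℝ (Fin d) → EuclideanSpace ℝ (Fin d) →L[ℝ] ℝ)
    (hd : ∀ x, HasFDerivAt U (U1 x) x) (x : EuclideanSpace ℝ (Fin d)) :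
    HasFDerivAt (fun z => Real.exp (-U z)) (-(Real.exp (-U x)) • U1 x) x := by
  refine (hd x).neg.exp.congr_fderiv ?_
  ext y; simp

lemma h_deriv2 {d : ℕ} (U : EuclideanSpace ℝ (Fin d) → ℝ)
    (U1 : EuclideanSpace ℝ (Fin d) → EuclideanSpace ℝ (Fin d) →L[ℝ] ℝ)
    (U2 : EuclideanSpace ℝ (Fin d) → EuclideanSpace ℝ (Fin d) →L[ℝ] EuclideanSpace ℝ (Fin d) →L[ℝ] ℝ)
    (hd : ∀ x, HasFDerivAt U (U1 x) x) (hd1 : ∀ x, HasFDerivAt U1 (U2 x) x)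
    (x : EuclideanSpace ℝ (Fin d)) :
    HasFDerivAt (fun z => -(Real.exp (-U z)) • U1 z)
      (Real.exp (-U x) • ((U1 x).smulRight (U1 x) - U2 x)) x := by
  refine ((h_deriv1 U U1 hd x).neg.smul (hd1 x)).congr_fderiv ?_
  ext y z; simp; ring

lemma PP_exp_pos {d : ℕ} (U : EuclideanSpace ℝ (Fin d) → ℝ) (hU : Continuous U) (C : ℝ)
    (hb : ∀ z, ‖Real.exp (-U z)‖ ≤ C) (s : ℝ) (x : EuclideanSpace ℝ (Fin d)) :
    0 < PP (fun z => Real.exp (-U z)) s x := by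
  have h1 := PP_int C (fun z => Real.exp (-U z)) (by fun_prop) hb s x
  have h2 : (fun z => ww z • Real.exp (-U (x + Real.sqrt s • z)))
      = fun z => Real.exp (-‖z‖ ^ 2 / 2 + -U (x + Real.sqrt s • z)) := by
    ext z; rw [Real.exp_add]; rfl
  unfold PP
  rw [h2] at h1 ⊢
  exact integral_exp_pos h1

lemma J_bound {d : ℕ} (U : EuclideanSpace ℝ (Fin d) → ℝ)
    (U1 : EuclideanSpace ℝ (Fin d) → EuclideanSpace ℝ (Fin d) →L[ℝ] ℝ)
    (hd : ∀ x, HasFDerivAt U (U1 x) x) (hc1 : Continuous U1)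
    (α m : ℝ) (hα : 0 < α) (hm : 0 < m)
    (hc : ∀ x y, α * ‖x - y‖ ^ 2 - ‖x - y‖ * (2 * m * Real.tanh (m * ‖x - y‖ / 2))
      ≤ (U1 x - U1 y) (x - y)) (C : ℝ)
    (hb : ∀ z, ‖Real.exp (-U z)‖ ≤ C) (hb1 : ∀ z, ‖-(Real.exp (-U z)) • U1 z‖ ≤ C) (s : ℝ) (hs : 0 ≤ s)
    (x : EuclideanSpace ℝ (Fin d)) :
    ∫ z, ww z * (‖z‖ ^ 2 * Real.exp (-U (x + Real.sqrt s • z))) ≤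
      (2 * d + (‖U1 x‖ + 2 * m) ^ 2 * s) * PP (fun z => Real.exp (-U z)) s x := by
  have hcU : Continuous U := continuous_iff_continuousAt.2 fun x => (hd x).continuousAt
  have hC : 0 ≤ C := (norm_nonneg _).trans (hb 0)
  set b := EuclideanSpace.basisFun (Fin d) ℝ with hbdef
  set G : EuclideanSpace ℝ (Fin d) → ℝ := fun z => Real.exp (-U (x + Real.sqrt s • z)) with hG
  set G1 : EuclideanSpace ℝ (Fin d) → EuclideanSpace ℝ (Fin d) →L[ℝ] ℝ :=
    fun z => Real.sqrt s • (-(Real.exp (-U (x + Real.sqrt s • z))) • U1 (x + Real.sqrt s • z)) with hG1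
  have hGd : ∀ z, HasFDerivAt G (G1 z) z := by
    intro z
    have q1 : HasFDerivAt (fun z : EuclideanSpace ℝ (Fin d) => x + Real.sqrt s • z)
      (Real.sqrt s • ContinuousLinearMap.id ℝ _) z :=
      ((hasFDerivAt_id z).const_smul (Real.sqrt s)).const_add x
    refine ((h_deriv1 U U1 hd (x + Real.sqrt s • z)).comp z q1).congr_fderiv ?_
    ext e; simp [hG1]
  have hGc : Continuous G := by fun_prop
  have hG1c : Continuous G1 := by fun_prop
  have hGb : ∀ z, ‖G z‖ ≤ C := fun z => hb _
  have hGp : ∀ z, 0 < G z := fun z => Real.exp_pos _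
  have hG1b : ∀ z, ‖G1 z‖ ≤ Real.sqrt s * C := by
    intro z
    rw [hG1, norm_smul, Real.norm_of_nonneg (Real.sqrt_nonneg s)]
    exact mul_le_mul_of_nonneg_left (hb1 _) (Real.sqrt_nonneg s)
  have hnz : ∀ z : EuclideanSpace ℝ (Fin d), ‖z‖ ≤ 1 + ‖z‖ ^ 2 := fun z => by
    nlinarith [sq_nonneg (‖z‖ - 1)]
  have ib : ∀ i, ∫ z, ww z * (⟪z, b i⟫ * (⟪z, b i⟫ * G z)) =
      ∫ z, ww z * (G z + ⟪z, b i⟫ * G1 z (b i)) := by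
    intro i
    have := ww_ibp (d := d) (C * (1 + Real.sqrt s)) (fun z => ⟪z, b i⟫ * G z)
      (fun z => ⟪z, b i⟫ • G1 z + G z • (innerSL ℝ (b i))) ?_ ?_ (b i) ?_ ?_
    · rw [this]
      congr 1; ext z
      simp only [add_apply, smul_apply, innerSL_apply_apply, smul_eq_mul,
        real_inner_self_eq_norm_sq, b.norm_eq_one]
      ring
    · intro z
      have q : HasFDerivAt (fun z : EuclideanSpace ℝ (Fin d) => ⟪z, b i⟫) (innerSL ℝ (b i)) z := by
        have := (innerSL ℝ (b i)).hasFDerivAt (x := z)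
        refine this.congr_of_eventuallyEq (Filter.Eventually.of_forall fun z => ?_)
        simp [real_inner_comm]
      exact (q.mul (hGd z))
    · fun_prop
    · intro z
      rw [norm_mul]
      have q1 := norm_inner_le_norm (𝕜 := ℝ) z (b i)
      rw [b.norm_eq_one, mul_one] at q1
      calc _ ≤ ‖z‖ * C := mul_le_mul q1 (hGb z) (norm_nonneg _) (norm_nonneg _)
        _ = C * ‖z‖ := by ring
        _ ≤ C * ((1 + Real.sqrt s) * (1 + ‖z‖)) := by
          refine mul_le_mul_of_nonneg_left ?_ hC
          nlinarith [Real.sqrt_nonneg s, norm_nonneg z, mul_nonneg (Real.sqrt_nonneg s) (norm_nonneg z)]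
        _ = _ := by ring
    · intro z
      simp only [add_apply, smul_apply, innerSL_apply_apply, smul_eq_mul]
      have q1 := norm_inner_le_norm (𝕜 := ℝ) z (b i)
      rw [b.norm_eq_one, mul_one] at q1
      have q2 := ((G1 z).le_opNorm (b i)).trans (mul_le_mul_of_nonneg_right (hG1b z) (norm_nonneg _))
      rw [b.norm_eq_one, mul_one] at q2
      rw [real_inner_self_eq_norm_sq, b.norm_eq_one]
      refine (norm_add_le _ _).trans ?_
      rw [norm_mul]
      have q3 : ‖G z * 1 ^ 2‖ ≤ C := by simpa using hGb z
      have q4 := mul_le_mul q1 q2 (norm_nonneg _) (norm_nonneg _)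
      have q5 : ‖z‖ * (Real.sqrt s * C) ≤ (1 + ‖z‖ ^ 2) * (Real.sqrt s * C) :=
        mul_le_mul_of_nonneg_right (hnz z) (by positivity)
      nlinarith [mul_nonneg hC (sq_nonneg ‖z‖)]
  have i2 : ∀ i, Integrable (fun z => ww z * (⟪z, b i⟫ * (⟪z, b i⟫ * G z))) := by
    intro i
    refine ww_dom C (fun z => ⟪z, b i⟫ * (⟪z, b i⟫ * G z)) (by fun_prop) fun z => ?_
    have q1 := norm_inner_le_norm (𝕜 := ℝ) z (b i)
    rw [b.norm_eq_one, mul_one] at q1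
    rw [← mul_assoc, norm_mul, norm_mul]
    calc _ ≤ ‖z‖ * ‖z‖ * C := by gcongr; exact hGb z
      _ ≤ _ := by nlinarith
  have i3 : ∀ i, Integrable (fun z => ww z * (G z + ⟪z, b i⟫ * G1 z (b i))) := by
    intro i
    refine ww_dom (C * (1 + Real.sqrt s)) (fun z => (G z + ⟪z, b i⟫ * G1 z (b i))) (by fun_prop) fun z => ?_
    have q1 := norm_inner_le_norm (𝕜 := ℝ) z (b i)
    rw [b.norm_eq_one, mul_one] at q1
    have q2 := ((G1 z).le_opNorm (b i)).trans (mul_le_mul_of_nonneg_right (hG1b z) (norm_nonneg _))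
    rw [b.norm_eq_one, mul_one] at q2
    refine (norm_add_le _ _).trans ?_
    rw [norm_mul]
    have q3 : ‖G z‖ ≤ C := by simpa using hGb z
    have q4 := mul_le_mul q1 q2 (norm_nonneg _) (norm_nonneg _)
    have q5 : ‖z‖ * (Real.sqrt s * C) ≤ (1 + ‖z‖ ^ 2) * (Real.sqrt s * C) :=
      mul_le_mul_of_nonneg_right (hnz z) (by positivity)
    nlinarith [mul_nonneg hC (sq_nonneg ‖z‖)]
  have iJ : Integrable (fun z => ww z * (‖z‖ ^ 2 * G z)) := by
    refine ww_dom C (fun z => ‖z‖ ^ 2 * G z) (by fun_prop) fun z => ?_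
    rw [norm_mul, norm_pow, norm_norm]
    nlinarith [mul_le_mul_of_nonneg_left (hGb z) (sq_nonneg ‖z‖)]
  have iI : Integrable (fun z => ww z * G z) := PP_int C _ (by fun_prop) hb s x
  have hsum : ∀ z, ∑ i, ww z * (⟪z, b i⟫ * (⟪z, b i⟫ * G z)) = ww z * (‖z‖ ^ 2 * G z) := by
    intro z
    rw [← b.sum_sq_inner_left z, Finset.sum_mul, Finset.mul_sum]
    refine Finset.sum_congr rfl fun i _ => ?_
    rw [real_inner_comm]; ring
  have hsum2 : ∀ z, ∑ i, ww z * (G z + ⟪z, b i⟫ * G1 z (b i)) = ww z * (d * G z + G1 z z) := by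
    intro z
    have : G1 z z = ∑ i, ⟪z, b i⟫ * G1 z (b i) := by
      generalize G1 z = l
      conv_lhs => rw [← b.sum_repr' z]
      simp [real_inner_comm]
    rw [this, ← Finset.mul_sum, Finset.sum_add_distrib]
    simp
  have key : ∫ z, ww z * (‖z‖ ^ 2 * G z) = ∫ z, ww z * (d * G z + G1 z z) := by
    simp_rw [← hsum, ← hsum2]
    rw [integral_finsetSum _ (fun i _ => i2 i), integral_finsetSum _ (fun i _ => i3 i)]
    exact Finset.sum_congr rfl fun i _ => ib i
  have iR : Integrable (fun z => ww z * (d * G z + G1 z z)) := by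
    simp_rw [← hsum2]
    exact integrable_finsetSum _ fun i _ => i3 i
  set c := ‖U1 x‖ + 2 * m with hcdef
  have pt : ∀ z, ww z * (d * G z + G1 z z) ≤
      (d + c ^ 2 * s / 2) * (ww z * G z) + (1 / 2) * (ww z * (‖z‖ ^ 2 * G z)) := by
    intro z
    have k0 := hc (x + Real.sqrt s • z) x
    simp only [add_sub_cancel_left, sub_apply, norm_smul, Real.norm_of_nonneg (Real.sqrt_nonneg s), map_smul,
      smul_eq_mul] at k0
    set r := Real.sqrt s with hr
    have hr0 : 0 ≤ r := Real.sqrt_nonneg s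
    have hr2 : r ^ 2 = s := Real.sq_sqrt hs
    have k1 : r * ‖z‖ * (2 * m * Real.tanh (m * (r * ‖z‖) / 2)) ≤ r * ‖z‖ * (2 * m) := by
      refine mul_le_mul_of_nonneg_left ?_ (by positivity)
      nlinarith [tanh_le_one' (m * (r * ‖z‖) / 2)]
    have k2 : -(‖U1 x‖ * ‖z‖) ≤ U1 x z := neg_le_of_abs_le ((U1 x).le_opNorm z)
    have k3 : G1 z z = - (r * U1 (x + r • z) z) * G z := by
      simp [hG1, hG]; ring
    have k4 : -(r * U1 (x + r • z) z) ≤ c ^ 2 * s / 2 + ‖z‖ ^ 2 / 2 := by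
      have : 0 ≤ α * (r * ‖z‖) ^ 2 := by positivity
      have k5 := mul_le_mul_of_nonneg_left k2 hr0
      rw [← hr2]
      nlinarith [sq_nonneg (c * r - ‖z‖)]
    have k6 := mul_le_mul_of_nonneg_right k4 (hGp z).le
    have k7 : d * G z + G1 z z ≤ (d + c ^ 2 * s / 2) * G z + 1 / 2 * (‖z‖ ^ 2 * G z) := by
      rw [k3]; nlinarith
    have := mul_le_mul_of_nonneg_left k7 (ww_pos z).le
    linarith
  have fin := integral_mono iR ((iI.const_mul (d + c ^ 2 * s / 2)).add (iJ.const_mul (1/2))) pt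
  rw [integral_add' (iI.const_mul _) (iJ.const_mul _), integral_const_mul, integral_const_mul,
    ← key] at fin
  have hPP : PP (fun z => Real.exp (-U z)) s x = ∫ z, ww z * G z := rfl
  rw [hPP]
  linarith

lemma U1_growth {d : ℕ} 
    (U1 : EuclideanSpace ℝ (Fin d) → EuclideanSpace ℝ (Fin d) →L[ℝ] ℝ) (L : ℝ) (hL0 : 0 ≤ L)
    (hL : ∀ x y, ‖U1 x - U1 y‖ ≤ L * ‖x - y‖) (z : EuclideanSpace ℝ (Fin d)) :
    ‖U1 z‖ ≤ (‖U1 0‖ + L) * (1 + ‖z‖) := by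
  have e := hL z 0
  rw [sub_zero] at e
  have : ‖U1 z‖ ≤ ‖U1 z - U1 0‖ + ‖U1 0‖ := by simpa using norm_add_le (U1 z - U1 0) (U1 0)
  nlinarith [norm_nonneg z, norm_nonneg (U1 0), mul_nonneg (norm_nonneg z) (norm_nonneg (U1 0))]

lemma grad_growth {d : ℕ} (U : EuclideanSpace ℝ (Fin d) → ℝ)
    (U1 : EuclideanSpace ℝ (Fin d) → EuclideanSpace ℝ (Fin d) →L[ℝ] ℝ)
    (hd : ∀ x, HasFDerivAt U (U1 x) x) (hc1 : Continuous U1)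
    (α m L : ℝ) (hα : 0 < α) (hm : 0 < m) (hL0 : 0 ≤ L)
    (hL : ∀ x y, ‖U1 x - U1 y‖ ≤ L * ‖x - y‖)
    (hc : ∀ x y, α * ‖x - y‖ ^ 2 - ‖x - y‖ * (2 * m * Real.tanh (m * ‖x - y‖ / 2))
      ≤ (U1 x - U1 y) (x - y)) (C : ℝ)
    (hb : ∀ z, ‖Real.exp (-U z)‖ ≤ C) (hb1 : ∀ z, ‖-(Real.exp (-U z)) • U1 z‖ ≤ C) (T : ℝ) :
    ∃ K : ℝ, 0 ≤ K ∧ ∀ s ∈ Set.Icc 0 T, ∀ x : EuclideanSpace ℝ (Fin d),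
      ‖PP (fun z => -(Real.exp (-U z)) • U1 z) s x‖ ≤
        K * (1 + ‖x‖) * PP (fun z => Real.exp (-U z)) s x := by
  have hcU : Continuous U := continuous_iff_continuousAt.2 fun x => (hd x).continuousAt
  have hC : 0 ≤ C := (norm_nonneg _).trans (hb 0)
  set A0 := ‖U1 0‖ + L with hA0
  have hA00 : 0 ≤ A0 := by positivity
  refine ⟨max 0 (A0 + L / 2 * (2 * d + (A0 + 2 * m) ^ 2 * T + T)), le_max_left _ _, fun s hs x => ?_⟩
  have hT : 0 ≤ T := hs.1.trans hs.2
  rw [max_eq_right (by positivity)]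
  set I := PP (fun z => Real.exp (-U z)) s x with hI
  have hI0 : 0 < I := PP_exp_pos U hcU C hb s x
  have hJ := J_bound U U1 hd hc1 α m hα hm hc C hb hb1 s hs.1 x
  set J := ∫ z, ww z * (‖z‖ ^ 2 * Real.exp (-U (x + Real.sqrt s • z))) with hJdef
  have iJ : Integrable (fun z => ww z * (‖z‖ ^ 2 * Real.exp (-U (x + Real.sqrt s • z)))) := by
    refine ww_dom C (fun z => ‖z‖ ^ 2 * Real.exp (-U (x + Real.sqrt s • z))) (by fun_prop) fun z => ?_
    rw [norm_mul, norm_pow, norm_norm]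
    nlinarith [mul_le_mul_of_nonneg_left (hb (x + Real.sqrt s • z)) (sq_nonneg ‖z‖)]
  have iI : Integrable (fun z => ww z * Real.exp (-U (x + Real.sqrt s • z))) := 
    PP_int C (fun z => Real.exp (-U z)) (by fun_prop) hb s x
  set A := 1 + ‖x‖ with hA
  have hA1 : 1 ≤ A := by have := norm_nonneg x; linarith
  have pt : ∀ z, ‖ww z • (-(Real.exp (-U (x + Real.sqrt s • z))) • U1 (x + Real.sqrt s • z))‖ ≤
      (‖U1 x‖ + L / 2 * (A * s)) * (ww z * Real.exp (-U (x + Real.sqrt s • z))) +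
      (L / 2 / A) * (ww z * (‖z‖ ^ 2 * Real.exp (-U (x + Real.sqrt s • z)))) := by
    intro z
    rw [norm_smul, norm_smul, norm_neg, Real.norm_of_nonneg (ww_pos z).le,
      Real.norm_of_nonneg (Real.exp_pos _).le]
    have e := hL (x + Real.sqrt s • z) x
    rw [add_sub_cancel_left, norm_smul, Real.norm_of_nonneg (Real.sqrt_nonneg s)] at e
    have e2 : ‖U1 (x + Real.sqrt s • z)‖ ≤ ‖U1 (x + Real.sqrt s • z) - U1 x‖ + ‖U1 x‖ := by
      simpa using norm_add_le (U1 (x + Real.sqrt s • z) - U1 x) (U1 x)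
    have e3 : Real.sqrt s * ‖z‖ ≤ A * s / 2 + ‖z‖ ^ 2 / A / 2 := by
      have h1 : Real.sqrt s ^ 2 = s := Real.sq_sqrt hs.1
      have h2 : 0 ≤ (A * Real.sqrt s - ‖z‖) ^ 2 / A := by positivity
      have h3 : (A * Real.sqrt s - ‖z‖) ^ 2 / A = A * s - 2 * (Real.sqrt s * ‖z‖) + ‖z‖ ^ 2 / A := by
        field_simp
        linear_combination A ^ 2 * h1
      linarith
    have e4 : ‖U1 (x + Real.sqrt s • z)‖ ≤ ‖U1 x‖ + L / 2 * (A * s) + L / 2 / A * ‖z‖ ^ 2 := by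
      have := mul_le_mul_of_nonneg_left e3 hL0
      have h4 : L * (A * s / 2 + ‖z‖ ^ 2 / A / 2) = L / 2 * (A * s) + L / 2 / A * ‖z‖ ^ 2 := by ring
      linarith
    have := mul_le_mul_of_nonneg_left e4 (mul_nonneg (ww_pos z).le (Real.exp_pos (-U (x + Real.sqrt s • z))).le)
    linarith
  have fin := norm_integral_le_of_norm_le ((iI.const_mul (‖U1 x‖ + L / 2 * (A * s))).add
    (iJ.const_mul (L / 2 / A))) (Filter.Eventually.of_forall pt)
  rw [integral_add' (iI.const_mul _) (iJ.const_mul _), integral_const_mul, integral_const_mul,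
    ← hJdef] at fin
  have hI' : ∫ z, ww z * Real.exp (-U (x + Real.sqrt s • z)) = I := rfl
  rw [hI'] at fin
  refine fin.trans ?_
  have g := U1_growth U1 L hL0 hL x
  rw [← hA0, ← hA] at g
  have h1 : J ≤ ((2 * d + (A0 + 2 * m) ^ 2 * T) * A ^ 2) * I := by
    refine hJ.trans (mul_le_mul_of_nonneg_right ?_ hI0.le)
    have h2 : (‖U1 x‖ + 2 * m) ^ 2 ≤ ((A0 + 2 * m) * A) ^ 2 := by
      refine pow_le_pow_left₀ (by positivity) ?_ 2
      nlinarith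
    have h3 : (‖U1 x‖ + 2 * m) ^ 2 * s ≤ ((A0 + 2 * m) * A) ^ 2 * T :=
      mul_le_mul h2 hs.2 hs.1 (by positivity)
    have h4 : (2 * d : ℝ) ≤ 2 * d * A ^ 2 := le_mul_of_one_le_right (by positivity) (one_le_pow₀ hA1)
    nlinarith
  have h2 : L / 2 / A * J ≤ L / 2 * (2 * d + (A0 + 2 * m) ^ 2 * T) * A * I := by
    calc _ ≤ L / 2 / A * (((2 * d + (A0 + 2 * m) ^ 2 * T) * A ^ 2) * I) :=
          mul_le_mul_of_nonneg_left h1 (by positivity)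
      _ = _ := by field_simp
  have h3 : (‖U1 x‖ + L / 2 * (A * s)) * I ≤ (A0 * A + L / 2 * (A * T)) * I := by
    have := hs.2
    gcongr
  linarith

lemma u_bound {d : ℕ} (U : EuclideanSpace ℝ (Fin d) → ℝ)
    (U1 : EuclideanSpace ℝ (Fin d) → EuclideanSpace ℝ (Fin d) →L[ℝ] ℝ)
    (hd : ∀ x, HasFDerivAt U (U1 x) x) (L : ℝ) (hL0 : 0 ≤ L)
    (hL : ∀ x y, ‖U1 x - U1 y‖ ≤ L * ‖x - y‖) (C : ℝ)
    (hb : ∀ z, ‖Real.exp (-U z)‖ ≤ C) (T : ℝ) :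
    ∃ K : ℝ, 0 ≤ K ∧ ∀ s ∈ Set.Icc 0 T, ∀ x : EuclideanSpace ℝ (Fin d),
      |-Real.log (PP (fun z => Real.exp (-U z)) s x)| ≤ K * (1 + ‖x‖ ^ 2) := by
  have hcU : Continuous U := continuous_iff_continuousAt.2 fun x => (hd x).continuousAt
  set A0 := ‖U1 0‖ + L with hA0
  have hA00 : 0 ≤ A0 := by positivity
  have hUb : ∀ y, U y ≤ (|U 0| + 2 * A0) * (1 + ‖y‖ ^ 2) := by
    intro y
    have := (convex_ball (0 : EuclideanSpace ℝ (Fin d)) (‖y‖ + 1)).norm_image_sub_le_of_norm_hasFDerivWithin_le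
      (f := U) (f' := U1) (C := A0 * (2 + ‖y‖)) (x := 0) (y := y)
      (fun x _ => (hd x).hasFDerivWithinAt) (fun x hx => by
        refine (U1_growth U1 L hL0 hL x).trans (mul_le_mul_of_nonneg_left ?_ hA00)
        rw [mem_ball_zero_iff] at hx; linarith) (by simp; positivity) (by simp)
    rw [sub_zero, Real.norm_eq_abs] at this
    have h1 := le_abs_self (U y - U 0)
    have h2 := le_abs_self (U 0)
    have h3 : A0 * (2 + ‖y‖) * ‖y‖ ≤ 2 * A0 * (1 + ‖y‖ ^ 2) := by
      have : (2 + ‖y‖) * ‖y‖ ≤ 2 * (1 + ‖y‖ ^ 2) := by nlinarith [sq_nonneg (‖y‖ - 1)]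
      nlinarith
    nlinarith [mul_nonneg (abs_nonneg (U 0)) (sq_nonneg ‖y‖)]
  set C3 := |U 0| + 2 * A0 with hC3
  have hC30 : 0 ≤ C3 := by positivity
  set Kc : ℝ := ∫ z : EuclideanSpace ℝ (Fin d), Real.exp (-‖z‖ ^ 2 / 2 + -(2 * C3 * T * ‖z‖ ^ 2)) with hKc
  set W : ℝ := ∫ z : EuclideanSpace ℝ (Fin d), ww z with hW
  refine ⟨2 * C3 + |Real.log Kc| + |Real.log (C * W)|, by positivity, fun s hs x => ?_⟩
  have hT : 0 ≤ T := hs.1.trans hs.2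
  have ik : Integrable fun z : EuclideanSpace ℝ (Fin d) =>
      Real.exp (-‖z‖ ^ 2 / 2 + -(2 * C3 * T * ‖z‖ ^ 2)) := by
    refine (gauss_int (1/2 + 2 * C3 * T) (by positivity)).congr (Filter.Eventually.of_forall fun z => ?_)
    simp only
    congr 1; ring
  have hK0 : 0 < Kc := integral_exp_pos ik
  set I := PP (fun z => Real.exp (-U z)) s x with hI
  have hI0 : 0 < I := PP_exp_pos U hcU C hb s x
  have iI : Integrable (fun z => ww z * Real.exp (-U (x + Real.sqrt s • z))) := 
    PP_int C (fun z => Real.exp (-U z)) (by fun_prop) hb s x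
  have up : I ≤ C * W := by
    rw [hW, ← integral_const_mul]
    refine integral_mono iI (ww_int.const_mul C) fun z => ?_
    have := (le_abs_self _).trans (hb (x + Real.sqrt s • z))
    have := mul_le_mul_of_nonneg_left this (ww_pos z).le
    simp only [smul_eq_mul]
    linarith
  have lo : Real.exp (-(C3 * (1 + 2 * ‖x‖ ^ 2))) * Kc ≤ I := by
    rw [hKc, ← integral_const_mul]
    refine integral_mono (ik.const_mul _) iI fun z => ?_
    simp only [smul_eq_mul]
    rw [ww, ← Real.exp_add, ← Real.exp_add, Real.exp_le_exp]
    have h1 := hUb (x + Real.sqrt s • z)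
    have h2 : ‖x + Real.sqrt s • z‖ ^ 2 ≤ 2 * ‖x‖ ^ 2 + 2 * T * ‖z‖ ^ 2 := by
      have h3 := norm_add_le x (Real.sqrt s • z)
      rw [norm_smul, Real.norm_of_nonneg (Real.sqrt_nonneg s)] at h3
      have h4 : ‖x + Real.sqrt s • z‖ ^ 2 ≤ (‖x‖ + Real.sqrt s * ‖z‖) ^ 2 :=
        pow_le_pow_left₀ (norm_nonneg _) h3 2
      have h5 : Real.sqrt s ^ 2 = s := Real.sq_sqrt hs.1
      have h6 : (Real.sqrt s * ‖z‖) ^ 2 ≤ T * ‖z‖ ^ 2 := by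
        rw [mul_pow, h5]; exact mul_le_mul_of_nonneg_right hs.2 (by positivity)
      nlinarith [sq_nonneg (‖x‖ - Real.sqrt s * ‖z‖)]
    have := mul_le_mul_of_nonneg_left h2 hC30
    linarith
  have l1 := Real.log_le_log hI0 up
  have l2 := Real.log_le_log (by positivity) lo
  rw [Real.log_mul (Real.exp_pos _).ne' hK0.ne', Real.log_exp] at l2
  have a1 := le_abs_self (Real.log (C * W))
  have a2 := neg_abs_le (Real.log Kc)
  have a3 := abs_nonneg (Real.log (C * W))
  have a4 := abs_nonneg (Real.log Kc)
  have a5 := sq_nonneg ‖x‖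
  have b1 := mul_nonneg a3 a5
  have b2 := mul_nonneg a4 a5
  have b3 := mul_nonneg hC30 a5
  rw [abs_neg, abs_le]
  constructor <;> nlinarith

noncomputable def FF (α m s ρ : ℝ) : ℝ :=
  2 * Real.log (Real.cosh (m / (1 + α * s) * ρ)) - α / (1 + α * s) * ρ ^ 2

noncomputable def FF1 (α m s ρ : ℝ) : ℝ :=
  2 * (m / (1 + α * s)) * Real.tanh (m / (1 + α * s) * ρ) - 2 * (α / (1 + α * s)) * ρ

noncomputable def FF2 (α m s ρ : ℝ) : ℝ :=
  2 * (m / (1 + α * s)) ^ 2 * (1 - Real.tanh (m / (1 + α * s) * ρ) ^ 2) - 2 * (α / (1 + α * s))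

noncomputable def FFs (α m s ρ : ℝ) : ℝ :=
  -2 * (α / (1 + α * s)) * (m / (1 + α * s)) * ρ * Real.tanh (m / (1 + α * s) * ρ)
    + (α / (1 + α * s)) ^ 2 * ρ ^ 2

lemma hasDerivAt_logcosh (y : ℝ) : HasDerivAt (fun y => Real.log (Real.cosh y)) (Real.tanh y) y := by
  rw [Real.tanh_eq_sinh_div_cosh]
  exact (Real.hasDerivAt_cosh y).log (Real.cosh_pos y).ne'

lemma hasDerivAt_tanh' (y : ℝ) : HasDerivAt Real.tanh (1 - Real.tanh y ^ 2) y := by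
  have h := (Real.hasDerivAt_sinh y).div (Real.hasDerivAt_cosh y) (Real.cosh_pos y).ne'
  have e : Real.tanh = fun y => Real.sinh y / Real.cosh y := by
    ext y; exact Real.tanh_eq_sinh_div_cosh y
  have h3 : HasDerivAt (fun y => Real.sinh y / Real.cosh y) (1 - Real.tanh y ^ 2) y := by
    refine h.congr_deriv ?_
    rw [Real.tanh_eq_sinh_div_cosh]
    have := (Real.cosh_pos y).ne'
    field_simp
  rw [← e] at h3
  exact h3

lemma FF_d1 (α m s ρ : ℝ) : HasDerivAt (FF α m s) (FF1 α m s ρ) ρ := by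
  have h1 : HasDerivAt (fun ρ => m / (1 + α * s) * ρ) (m / (1 + α * s)) ρ := by
    simpa using (hasDerivAt_id ρ).const_mul (m / (1 + α * s))
  have h2 := ((hasDerivAt_logcosh (m / (1 + α * s) * ρ)).comp ρ h1).const_mul 2
  have h3 := (hasDerivAt_pow 2 ρ).const_mul (α / (1 + α * s))
  exact (h2.sub h3).congr_deriv (by unfold FF1; simp; ring)

lemma FF_d2 (α m s ρ : ℝ) : HasDerivAt (FF1 α m s) (FF2 α m s ρ) ρ := by
  have h1 : HasDerivAt (fun ρ => m / (1 + α * s) * ρ) (m / (1 + α * s)) ρ := by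
    simpa using (hasDerivAt_id ρ).const_mul (m / (1 + α * s))
  have h2 := ((hasDerivAt_tanh' (m / (1 + α * s) * ρ)).comp ρ h1).const_mul (2 * (m / (1 + α * s)))
  have h3 := (hasDerivAt_id ρ).const_mul (2 * (α / (1 + α * s)))
  exact (h2.sub h3).congr_deriv (by unfold FF2; simp; ring)

lemma FF_ds (α m s ρ : ℝ) (hs : 0 < 1 + α * s) :
    HasDerivAt (fun s => FF α m s ρ) (FFs α m s ρ) s := by
  have h0 : HasDerivAt (fun s => (1 + α * s)⁻¹) (-α / (1 + α * s) ^ 2) s := by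
    have : HasDerivAt (fun s => 1 + α * s) α s := by
      simpa using ((hasDerivAt_id s).const_mul α).const_add 1
    exact this.inv hs.ne'
  have h1 : HasDerivAt (fun s => m / (1 + α * s) * ρ) (m * (-α / (1 + α * s) ^ 2) * ρ) s :=
    (h0.const_mul m).mul_const ρ
  have h2 := ((hasDerivAt_logcosh (m / (1 + α * s) * ρ)).comp s h1).const_mul 2
  have h3 : HasDerivAt (fun s => α / (1 + α * s) * ρ ^ 2) (α * (-α / (1 + α * s) ^ 2) * ρ ^ 2) s :=
    (h0.const_mul α).mul_const (ρ ^ 2)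
  exact (h2.sub h3).congr_deriv (by unfold FFs; field_simp; ring)

lemma FF_eq (α m s ρ : ℝ) : FFs α m s ρ - FF1 α m s ρ ^ 2 / 4 - FF2 α m s ρ / 2
    = α / (1 + α * s) - (m / (1 + α * s)) ^ 2 := by
  unfold FFs FF1 FF2; ring

lemma logcosh_nonneg (y : ℝ) : 0 ≤ Real.log (Real.cosh y) := Real.log_nonneg (Real.one_le_cosh y)

lemma logcosh_le (y : ℝ) : Real.log (Real.cosh y) ≤ y ^ 2 / 2 := by
  rw [Real.log_le_iff_le_exp (Real.cosh_pos y)]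
  exact Real.cosh_le_exp_half_sq y

lemma coef_le (α m s : ℝ) (hα : 0 < α) (hm : 0 < m) (hs : 0 ≤ s) :
    0 < m / (1 + α * s) ∧ m / (1 + α * s) ≤ m := by
  have : 0 ≤ α * s := by positivity
  exact ⟨by positivity, div_le_self hm.le (by linarith)⟩

lemma FF_bound (α m s ρ : ℝ) (hα : 0 < α) (hm : 0 < m) (hs : 0 ≤ s) :
    |FF α m s ρ| ≤ (m ^ 2 + α) * (1 + ρ ^ 2) := by
  obtain ⟨a1, a2⟩ := coef_le α m s hα hm hs
  obtain ⟨b1, b2⟩ := coef_le α α s hα hα hs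
  have h1 := logcosh_nonneg (m / (1 + α * s) * ρ)
  have h2 := logcosh_le (m / (1 + α * s) * ρ)
  have h3 : (m / (1 + α * s) * ρ) ^ 2 ≤ m ^ 2 * ρ ^ 2 := by
    rw [mul_pow]; gcongr
  have h4 : α / (1 + α * s) * ρ ^ 2 ≤ α * ρ ^ 2 := by gcongr
  have h5 : 0 ≤ α / (1 + α * s) * ρ ^ 2 := by positivity
  have h6 := sq_nonneg m
  have h7 := mul_nonneg h6 (sq_nonneg ρ)
  unfold FF
  rw [abs_le]
  constructor <;> nlinarith

lemma FF1_bound (α m s ρ : ℝ) (hα : 0 < α) (hm : 0 < m) (hs : 0 ≤ s) :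
    |FF1 α m s ρ| ≤ (2 * m + 2 * α) * (1 + |ρ|) := by
  obtain ⟨a1, a2⟩ := coef_le α m s hα hm hs
  obtain ⟨b1, b2⟩ := coef_le α α s hα hα hs
  unfold FF1
  refine (abs_sub _ _).trans ?_
  rw [abs_mul, abs_mul (2 * (α / (1 + α * s))), abs_of_pos (by positivity : 0 < 2 * (m / (1 + α * s))),
    abs_of_pos (by positivity : 0 < 2 * (α / (1 + α * s)))]
  have h1 : |Real.tanh (m / (1 + α * s) * ρ)| ≤ 1 :=
    abs_le.2 ⟨(Real.neg_one_lt_tanh _).le, tanh_le_one' _⟩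
  have h2 : 2 * (m / (1 + α * s)) * |Real.tanh (m / (1 + α * s) * ρ)| ≤ 2 * m * 1 := by
    gcongr
  have h3 : 2 * (α / (1 + α * s)) * |ρ| ≤ 2 * α * |ρ| := by gcongr
  nlinarith [mul_nonneg hm.le (abs_nonneg ρ)]

lemma FF_even (α m s ρ : ℝ) : FF α m s (-ρ) = FF α m s ρ := by
  unfold FF; rw [mul_neg, Real.cosh_neg, neg_sq]

lemma FF_cont (α m T : ℝ) (hα : 0 < α) :
    ContinuousOn (fun z : ℝ × ℝ => FF α m z.1 z.2) (Set.Icc 0 T ×ˢ Set.univ) := by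
  have hne : ∀ z ∈ Set.Icc 0 T ×ˢ (Set.univ : Set ℝ), 1 + α * z.1 ≠ 0 := by
    intro z hz
    have : 0 ≤ α * z.1 := mul_nonneg hα.le hz.1.1
    positivity
  unfold FF
  refine ContinuousOn.sub (continuousOn_const.mul (ContinuousOn.log ?_ fun z _ => (Real.cosh_pos _).ne'))
    (ContinuousOn.mul (ContinuousOn.div (by fun_prop) (by fun_prop) hne) (by fun_prop))
  exact Real.continuous_cosh.comp_continuousOn
    (ContinuousOn.mul (ContinuousOn.div (by fun_prop) (by fun_prop) hne) (by fun_prop))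

lemma FF_final (α m s ρ : ℝ) : FF α m s ρ ≤ -(α / (1 + α * s) - (m / (1 + α * s)) ^ 2) * ρ ^ 2 := by
  have := logcosh_le (m / (1 + α * s) * ρ)
  unfold FF; nlinarith

/-- Initial condition. -/
lemma init_mono {d : ℕ} (U : EuclideanSpace ℝ (Fin d) → ℝ)
    (U1 : EuclideanSpace ℝ (Fin d) → EuclideanSpace ℝ (Fin d) →L[ℝ] ℝ)
    (hd : ∀ x, HasFDerivAt U (U1 x) x)
    (α m : ℝ) 
    (hc : ∀ x y, α * ‖x - y‖ ^ 2 - ‖x - y‖ * (2 * m * Real.tanh (m * ‖x - y‖ / 2))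
      ≤ (U1 x - U1 y) (x - y)) (a θ : EuclideanSpace ℝ (Fin d)) (hθ : ‖θ‖ = 1) (ρ σ : ℝ)
    (hσ : 0 ≤ σ) (hρ : σ ≤ ρ) :
    U (a + σ • θ) + U (a - σ • θ) + FF α m 0 σ ≤ U (a + ρ • θ) + U (a - ρ • θ) + FF α m 0 ρ := by
  have hder : ∀ τ : ℝ, HasDerivAt (fun τ : ℝ => U (a + τ • θ) + U (a - τ • θ) + FF α m 0 τ)
      ((U1 (a + τ • θ) - U1 (a - τ • θ)) θ + FF1 α m 0 τ) τ := by
    intro τ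
    have h1 : HasDerivAt (fun τ : ℝ => τ • θ) θ τ := by
      simpa using (hasDerivAt_id τ).smul_const θ
    have h2 := (hd (a + τ • θ)).comp_hasDerivAt τ (h1.const_add a)
    have h3 := (hd (a - τ • θ)).comp_hasDerivAt τ (h1.const_sub a)
    exact ((h2.add h3).add (FF_d1 α m 0 τ)).congr_deriv (by simp; ring)
  refine monotoneOn_of_deriv_nonneg (convex_Ici (0:ℝ))
    (f := fun τ : ℝ => U (a + τ • θ) + U (a - τ • θ) + FF α m 0 τ)
    (fun τ _ => (hder τ).continuousAt.continuousWithinAt)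
    (fun τ _ => (hder τ).differentiableAt.differentiableWithinAt) ?_ hσ (hσ.trans hρ) hρ
  intro τ hτ
  rw [interior_Ici] at hτ
  have hτ0 : 0 < τ := hτ
  rw [(hder τ).deriv]
  have k := hc (a + τ • θ) (a - τ • θ)
  have e : a + τ • θ - (a - τ • θ) = (2 * τ) • θ := by rw [mul_smul, two_smul]; abel
  rw [e, norm_smul, hθ, mul_one, Real.norm_of_nonneg (by positivity), map_smul, smul_eq_mul] at k
  have e2 : m * (2 * τ) / 2 = m * τ := by ring
  rw [e2] at k
  have k2 : 2 * τ * (2 * α * τ - 2 * m * Real.tanh (m * τ)) ≤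
      2 * τ * (U1 (a + τ • θ) - U1 (a - τ • θ)) θ := by nlinarith
  have k3 := le_of_mul_le_mul_left k2 (by positivity)
  unfold FF1
  simp only [mul_zero, add_zero, div_one]
  linarith

lemma U_second {d : ℕ} (U : EuclideanSpace ℝ (Fin d) → ℝ)
    (U1 : EuclideanSpace ℝ (Fin d) → EuclideanSpace ℝ (Fin d) →L[ℝ] ℝ)
    (hd : ∀ x, HasFDerivAt U (U1 x) x) (L : ℝ)
    (hL : ∀ x y, ‖U1 x - U1 y‖ ≤ L * ‖x - y‖) (y b : EuclideanSpace ℝ (Fin d)) :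
    U (y + b) + U (y - b) - 2 * U y ≤ L * ‖b‖ ^ 2 := by
  have hder : ∀ τ : ℝ, HasDerivAt (fun τ : ℝ => U (y + τ • b) + U (y - τ • b) - L * ‖b‖ ^ 2 * τ ^ 2)
      ((U1 (y + τ • b) - U1 (y - τ • b)) b - 2 * L * ‖b‖ ^ 2 * τ) τ := by
    intro τ
    have h1 : HasDerivAt (fun τ : ℝ => τ • b) b τ := by
      simpa using (hasDerivAt_id τ).smul_const b
    have h2 := (hd (y + τ • b)).comp_hasDerivAt τ (h1.const_add y)
    have h3 := (hd (y - τ • b)).comp_hasDerivAt τ (h1.const_sub y)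
    exact ((h2.add h3).sub ((hasDerivAt_pow 2 τ).const_mul (L * ‖b‖ ^ 2))).congr_deriv (by simp; ring)
  have := antitoneOn_of_deriv_nonpos (convex_Ici (0:ℝ))
    (f := fun τ : ℝ => U (y + τ • b) + U (y - τ • b) - L * ‖b‖ ^ 2 * τ ^ 2)
    (fun τ _ => (hder τ).continuousAt.continuousWithinAt)
    (fun τ _ => (hder τ).differentiableAt.differentiableWithinAt) (by
      intro τ hτ
      rw [interior_Ici] at hτ
      have hτ0 : 0 < τ := hτ
      rw [(hder τ).deriv]
      have k := hL (y + τ • b) (y - τ • b)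
      have e : y + τ • b - (y - τ • b) = (2 * τ) • b := by rw [mul_smul, two_smul]; abel
      rw [e, norm_smul, Real.norm_of_nonneg (by positivity)] at k
      have k2 := (le_abs_self _).trans ((U1 (y + τ • b) - U1 (y - τ • b)).le_opNorm b)
      have k3 := mul_le_mul_of_nonneg_right k (norm_nonneg b)
      nlinarith) (Set.mem_Ici.2 le_rfl) (Set.mem_Ici.2 zero_le_one) zero_le_one
  simp at this
  linarith

lemma int_CS {d : ℕ} (c f g : EuclideanSpace ℝ (Fin d) → ℝ) (k : ℝ) (hk : 0 < k)
    (ic : Integrable c) (iF : Integrable f) (ig : Integrable g)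
    (hf : ∀ z, 0 < f z) (h : ∀ z, c z ^ 2 ≤ k * (f z * g z)) :
    (∫ z, c z) ^ 2 ≤ k * ((∫ z, f z) * ∫ z, g z) := by
  have key : ∀ t : ℝ, 0 ≤ (k * ∫ z, f z) * (t * t) + (-2 * ∫ z, c z) * t + ∫ z, g z := by
    intro t
    have e : (k * ∫ z, f z) * (t * t) + (-2 * ∫ z, c z) * t + ∫ z, g z =
        ∫ z, (((k * (t * t)) * f z + (-2 * t) * c z) + g z) := by
      have i0 : Integrable (fun z => (k * (t * t)) * f z + (-2 * t) * c z) :=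
        (iF.const_mul _).add (ic.const_mul _)
      rw [integral_add i0 ig,
        integral_add (iF.const_mul _) (ic.const_mul _), integral_const_mul, integral_const_mul]
      ring
    rw [e]
    refine integral_nonneg fun z => ?_
    have h1 : 0 < k * f z := mul_pos hk (hf z)
    have h2 : 0 ≤ (k * f z) * (k * (t * t) * f z + -2 * t * c z + g z) := by
      nlinarith [sq_nonneg (k * f z * t - c z), h z]
    exact nonneg_of_mul_nonneg_right h2 h1
  have := discrim_le_zero key
  unfold discrim at this
  nlinarith

lemma log_second (A B I K : ℝ) (hA : 0 < A) (hB : 0 < B) (hI : 0 < I)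
    (h : I ^ 2 ≤ Real.exp K * (A * B)) : -Real.log A + -Real.log B - 2 * (-Real.log I) ≤ K := by
  have := Real.log_le_log (by positivity) h
  rw [Real.log_mul (Real.exp_pos K).ne' (by positivity), Real.log_mul hA.ne' hB.ne', Real.log_exp,
    Real.log_pow] at this
  push_cast at this
  linarith

lemma upper_L {d : ℕ} (U : EuclideanSpace ℝ (Fin d) → ℝ)
    (U1 : EuclideanSpace ℝ (Fin d) → EuclideanSpace ℝ (Fin d) →L[ℝ] ℝ)
    (hd : ∀ x, HasFDerivAt U (U1 x) x) (L : ℝ)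
    (hL : ∀ x y, ‖U1 x - U1 y‖ ≤ L * ‖x - y‖) (C : ℝ)
    (hb : ∀ z, ‖Real.exp (-U z)‖ ≤ C) (s : ℝ) (a b : EuclideanSpace ℝ (Fin d)) :
    -Real.log (PP (fun z => Real.exp (-U z)) s (a + b)) + -Real.log (PP (fun z => Real.exp (-U z)) s (a - b))
      - 2 * (-Real.log (PP (fun z => Real.exp (-U z)) s a)) ≤ L * ‖b‖ ^ 2 := by
  have hcU : Continuous U := continuous_iff_continuousAt.2 fun x => (hd x).continuousAt
  refine log_second _ _ _ _ (PP_exp_pos U hcU C hb s _) (PP_exp_pos U hcU C hb s _)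
    (PP_exp_pos U hcU C hb s _) ?_
  have hi := fun x => PP_int C (fun z => Real.exp (-U z)) (by fun_prop) hb s x
  refine int_CS _ _ _ _ (Real.exp_pos _) (hi a) (hi (a + b)) (hi (a - b))
    (fun z => mul_pos (ww_pos z) (Real.exp_pos _)) fun z => ?_
  simp only [smul_eq_mul]
  have e := U_second U U1 hd L hL (a + Real.sqrt s • z) b
  have e1 : a + Real.sqrt s • z + b = a + b + Real.sqrt s • z := by abel
  have e2 : a + Real.sqrt s • z - b = a - b + Real.sqrt s • z := by abel
  rw [e1, e2] at e
  have e3 : Real.exp (-U (a + Real.sqrt s • z)) ^ 2 ≤ Real.exp (L * ‖b‖ ^ 2) *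
      (Real.exp (-U (a + b + Real.sqrt s • z)) * Real.exp (-U (a - b + Real.sqrt s • z))) := by
    rw [← Real.exp_add, ← Real.exp_add, ← Real.exp_nat_mul, Real.exp_le_exp]
    push_cast; linarith
  have := mul_le_mul_of_nonneg_left e3 (sq_nonneg (ww z))
  linarith

lemma upper_s {d : ℕ} (U : EuclideanSpace ℝ (Fin d) → ℝ) (hcU : Continuous U) (C : ℝ)
    (hb : ∀ z, ‖Real.exp (-U z)‖ ≤ C) (s : ℝ) (hs : 0 < s) (a b : EuclideanSpace ℝ (Fin d)) :
    -Real.log (PP (fun z => Real.exp (-U z)) s (a + b)) + -Real.log (PP (fun z => Real.exp (-U z)) s (a - b))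
      - 2 * (-Real.log (PP (fun z => Real.exp (-U z)) s a)) ≤ 1 / s * ‖b‖ ^ 2 := by
  have hss : 0 < Real.sqrt s := Real.sqrt_pos.2 hs
  refine log_second _ _ _ _ (PP_exp_pos U hcU C hb s _) (PP_exp_pos U hcU C hb s _)
    (PP_exp_pos U hcU C hb s _) ?_
  have hi := fun x => PP_int C (fun z => Real.exp (-U z)) (by fun_prop) hb s x
  set β := (Real.sqrt s)⁻¹ • b with hβ
  have hsh : ∀ e : EuclideanSpace ℝ (Fin d), ∀ z, ww (z - (Real.sqrt s)⁻¹ • e) • Real.exp (-U (a + e + Real.sqrt s • (z - (Real.sqrt s)⁻¹ • e)))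
      = ww (z - (Real.sqrt s)⁻¹ • e) * Real.exp (-U (a + Real.sqrt s • z)) := by
    intro e z
    rw [smul_sub, smul_inv_smul₀ hss.ne', smul_eq_mul]
    congr 4; abel
  have i1 : ∀ e, Integrable (fun z => ww (z - (Real.sqrt s)⁻¹ • e) * Real.exp (-U (a + Real.sqrt s • z))) := by
    intro e
    have := (hi (a + e)).comp_sub_right ((Real.sqrt s)⁻¹ • e)
    exact this.congr (Filter.Eventually.of_forall fun z => hsh e z)
  have i2 : ∀ e, PP (fun z => Real.exp (-U z)) s (a + e) =
      ∫ z, ww (z - (Real.sqrt s)⁻¹ • e) * Real.exp (-U (a + Real.sqrt s • z)) := by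
    intro e
    unfold PP
    rw [← integral_sub_right_eq_self _ ((Real.sqrt s)⁻¹ • e)]
    exact integral_congr_ae (Filter.Eventually.of_forall fun z => hsh e z)
  rw [i2 b, sub_eq_add_neg, i2 (-b)]
  refine int_CS _ _ _ _ (Real.exp_pos _) (hi a) (i1 b) (i1 (-b))
    (fun z => mul_pos (ww_pos _) (Real.exp_pos _)) fun z => ?_
  simp only [smul_eq_mul]
  rw [smul_neg, sub_neg_eq_add, ← hβ]
  have e3 : ww z ^ 2 = Real.exp (1 / s * ‖b‖ ^ 2) * (ww (z - β) * ww (z + β)) := by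
    unfold ww
    rw [← Real.exp_add, ← Real.exp_add, ← Real.exp_nat_mul]
    congr 1
    have h1 := parallelogram_law_with_norm ℝ z β
    have h2 : ‖β‖ ^ 2 = 1 / s * ‖b‖ ^ 2 := by
      rw [hβ, norm_smul, mul_pow, norm_inv, inv_pow, Real.norm_of_nonneg hss.le, Real.sq_sqrt hs.le]
      ring
    push_cast
    linarith
  rw [mul_pow, e3]
  exact le_of_eq (by ring)

lemma PP_zero {d : ℕ} (U : EuclideanSpace ℝ (Fin d) → ℝ) (x : EuclideanSpace ℝ (Fin d)) :
    -Real.log (PP (fun z => Real.exp (-U z)) 0 x) =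
      U x - Real.log (∫ z : EuclideanSpace ℝ (Fin d), ww z) := by
  have hW : 0 < ∫ z : EuclideanSpace ℝ (Fin d), ww z := integral_exp_pos ww_int
  unfold PP
  simp only [Real.sqrt_zero, zero_smul, add_zero, smul_eq_mul]
  rw [integral_mul_const, Real.log_mul hW.ne' (Real.exp_pos _).ne', Real.log_exp]
  ring

lemma cont_smul_sub' {X V : Type*} [TopologicalSpace X] [NormedAddCommGroup V] [NormedSpace ℝ V]
    (c : X → ℝ) (a b : X → V) (hc : Continuous c) (ha : Continuous a) (hb : Continuous b) :
    Continuous fun z => c z • (a z - b z) := hc.smul (ha.sub hb)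

lemma h2_cont' {V : Type*} [NormedAddCommGroup V] [NormedSpace ℝ V] (U : V → ℝ)
    (U1 : V → V →L[ℝ] ℝ) (U2 : V → V →L[ℝ] V →L[ℝ] ℝ) (hU : Continuous U) (hU1 : Continuous U1)
    (hU2 : Continuous U2) :
    Continuous fun z => Real.exp (-U z) • ((U1 z).smulRight (U1 z) - U2 z) := by
  have q : Continuous fun z => (U1 z).smulRight (U1 z) :=
    (ContinuousLinearMap.smulRightL ℝ V (V →L[ℝ] ℝ)).continuous₂.comp (hU1.prodMk hU1)
  exact cont_smul_sub' (V := V →L[ℝ] V →L[ℝ] ℝ) (fun z => Real.exp (-U z))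
    (fun z => (U1 z).smulRight (U1 z)) U2 (by fun_prop) q hU2

lemma D2_deriv {V : Type*} [NormedAddCommGroup V] [NormedSpace ℝ V] (v : V → ℝ)
    (v1 : V → V →L[ℝ] ℝ) (v2 : V →L[ℝ] V →L[ℝ] ℝ) (x e : V) (hv : HasFDerivAt v (v1 x) x)
    (hv1 : HasFDerivAt v1 v2 x) (hp : 0 < v x) :
    HasDerivAt (fun τ : ℝ => -(v1 (x + τ • e) e) / v (x + τ • e))
      (-(v2 e e) / v x + (v1 x e / v x) ^ 2) 0 := by
  have l : HasDerivAt (fun τ : ℝ => x + τ • e) e 0 := by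
    simpa using ((hasDerivAt_id (0:ℝ)).smul_const e).const_add x
  have vd1' : HasFDerivAt v1 v2 (x + (0:ℝ) • e) := by simpa using hv1
  have vd' : HasFDerivAt v (v1 x) (x + (0:ℝ) • e) := by simpa using hv
  have q1 : HasDerivAt (fun τ : ℝ => v1 (x + τ • e) e) (v2 e e) 0 := by
    have h3 : HasDerivAt (fun τ : ℝ => v1 (x + τ • e)) (v2 e) 0 := vd1'.comp_hasDerivAt (0:ℝ) l
    exact (ContinuousLinearMap.apply ℝ ℝ e).hasFDerivAt.comp_hasDerivAt (0:ℝ) h3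
  have q2 : HasDerivAt (fun τ : ℝ => v (x + τ • e)) (v1 x e) 0 :=
    vd'.comp_hasDerivAt (0:ℝ) l
  have hne : v (x + (0:ℝ) • e) ≠ 0 := by simpa using hp.ne'
  have q3 := q1.neg.div q2 hne
  refine q3.congr_deriv ?_
  simp only [zero_smul, add_zero, Pi.neg_apply]
  have := hp.ne'
  field_simp
  ring

set_option maxHeartbeats 2000000 in
lemma heat_lip {d : ℕ} (hdd : 1 ≤ d) (U : EuclideanSpace ℝ (Fin d) → ℝ)
    (U1 : EuclideanSpace ℝ (Fin d) → EuclideanSpace ℝ (Fin d) →L[ℝ] ℝ)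
    (U2 : EuclideanSpace ℝ (Fin d) → EuclideanSpace ℝ (Fin d) →L[ℝ] EuclideanSpace ℝ (Fin d) →L[ℝ] ℝ)
    (hd : ∀ x, HasFDerivAt U (U1 x) x) (hd1 : ∀ x, HasFDerivAt U1 (U2 x) x) (hU2 : Continuous U2)
    (α m L : ℝ) (hα : 0 < α) (hm : 0 < m) (hL0 : 0 ≤ L)
    (hL : ∀ x y, ‖U1 x - U1 y‖ ≤ L * ‖x - y‖)
    (hc : ∀ x y, α * ‖x - y‖ ^ 2 - ‖x - y‖ * (2 * m * Real.tanh (m * ‖x - y‖ / 2))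
      ≤ (U1 x - U1 y) (x - y)) (T : ℝ) (hT : 0 < T) :
    (∀ x, 0 < PP (fun z => Real.exp (-U z)) T x) ∧
    ∃ p : EuclideanSpace ℝ (Fin d) → EuclideanSpace ℝ (Fin d),
      (∀ x, HasGradientAt (fun x => -Real.log (PP (fun z => Real.exp (-U z)) T x)) (p x) x) ∧
      ∀ x y, ‖p x - p y‖ ≤ max (min (1 / T) L)
        (-(α / (1 + α * T) - (m / (1 + α * T)) ^ 2)) * ‖x - y‖ := by
  have hcU : Continuous U := continuous_iff_continuousAt.2 fun x => (hd x).continuousAt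
  have hcU1 : Continuous U1 := continuous_iff_continuousAt.2 fun x => (hd1 x).continuousAt
  obtain ⟨C, hb, hb1, hb2⟩ := h_data U U1 U2 hd hd1 α m L hα hm hL0 hL hc
  have vpos := PP_exp_pos U hcU C hb
  obtain ⟨K1, hK1, gg⟩ := grad_growth U U1 hd hcU1 α m L hα hm hL0 hL hc C hb hb1 T
  obtain ⟨K2, hK2, ub⟩ := u_bound U U1 hd L hL0 hL C hb T
  set h : EuclideanSpace ℝ (Fin d) → ℝ := fun z => Real.exp (-U z) with hh
  set h1 : EuclideanSpace ℝ (Fin d) → EuclideanSpace ℝ (Fin d) →L[ℝ] ℝ :=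
    fun z => -(Real.exp (-U z)) • U1 z with hh1
  set h2 : EuclideanSpace ℝ (Fin d) → EuclideanSpace ℝ (Fin d) →L[ℝ] EuclideanSpace ℝ (Fin d) →L[ℝ] ℝ :=
    fun z => Real.exp (-U z) • ((U1 z).smulRight (U1 z) - U2 z) with hh2
  have hhd : ∀ x, HasFDerivAt h (h1 x) x := h_deriv1 U U1 hd
  have hhd1 : ∀ x, HasFDerivAt h1 (h2 x) x := h_deriv2 U U1 U2 hd hd1
  have hch : Continuous h := by fun_prop
  have hch1 : Continuous h1 := by fun_prop
  have hch2 : Continuous h2 := h2_cont' U U1 U2 hcU hcU1 hU2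
  have vd : ∀ s x, HasFDerivAt (PP h s) (PP h1 s x) x := PP_fderiv C h h1 hb hhd hch1 hb1
  have vd1 : ∀ s x, HasFDerivAt (PP h1 s) (PP h2 s x) x := PP_fderiv C h1 h2 hb1 hhd1 hch2 hb2
  set p : ℝ → EuclideanSpace ℝ (Fin d) → EuclideanSpace ℝ (Fin d) := fun s x =>
    (InnerProductSpace.toDual ℝ (EuclideanSpace ℝ (Fin d))).symm (-(PP h s x)⁻¹ • PP h1 s x) with hpdef
  have pin : ∀ s x e, ⟪p s x, e⟫ = -(PP h1 s x e) / PP h s x := by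
    intro s x e
    simp only [hpdef]
    rw [InnerProductSpace.toDual_symm_apply]
    simp; ring
  have hp : ∀ s x, HasGradientAt (fun x => -Real.log (PP h s x)) (p s x) x := by
    intro s x
    rw [hasGradientAt_iff_hasFDerivAt]
    refine ((vd s x).log (vpos s x).ne').neg.congr_fderiv ?_
    ext e
    simp [pin]; ring
  set D2 : ℝ → EuclideanSpace ℝ (Fin d) → EuclideanSpace ℝ (Fin d) → ℝ := fun s x e =>
    -(PP h2 s x e e) / PP h s x + (PP h1 s x e / PP h s x) ^ 2 with hD2def
  have lower : ∀ a θ : EuclideanSpace ℝ (Fin d), ∀ ρ : ℝ, ‖θ‖ = 1 → 0 ≤ ρ →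
      0 ≤ KK (fun s x => -Real.log (PP h s x)) (FF α m) T a θ ρ 0 := by
    intro a θ ρ hθ hρ
    refine mp_main (d := d) ⟨0, by omega⟩ T (fun s x => -Real.log (PP h s x)) p D2 (FF α m) (FF1 α m) (FF2 α m)
      (FFs α m) (K1 + K2 + (m ^ 2 + α) + (2 * m + 2 * α)) (by positivity) (fun s _ x => hp s x) ?_ ?_ ?_
      (fun s _ ρ => FF_d1 α m s ρ) (fun s _ ρ => FF_d2 α m s ρ) ?_ ?_ ?_ ?_ ?_ ?_ ?_
      (FF_cont α m T hα) ?_ (FF_even α m) T ⟨hT.le, le_rfl⟩ a θ ρ 0 hθ hρ (by simpa using hρ)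
    · intro s hs x e
      have e1 : (fun τ : ℝ => ⟪p s (x + τ • e), e⟫) =
          (fun τ : ℝ => -(PP h1 s (x + τ • e) e) / PP h s (x + τ • e)) := by
        ext τ; exact pin _ _ _
      rw [e1]
      exact D2_deriv (PP h s) (PP h1 s) (PP h2 s x) x e (vd s x) (vd1 s x) (vpos s x)
    · intro s x e
      simp [hD2def]
      ring
    · intro s hs x b
      have q := ((heat_eq C h h1 h2 hb hhd hb1 hhd1 hb2 hch2 s hs.1 x b).log (vpos s x).ne').neg
      refine q.congr_deriv ?_
      simp only [hD2def, pin]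
      have : ∀ i, -(PP h2 s x (b i) (b i)) / PP h s x + (PP h1 s x (b i) / PP h s x) ^ 2
         - (-(PP h1 s x (b i)) / PP h s x) ^ 2 = -(1 / PP h s x) * PP h2 s x (b i) (b i) := by
        intro i; ring
      simp_rw [this]
      rw [← Finset.mul_sum]
      ring
    · intro s hs ρ
      have := mul_pos hα hs.1
      exact FF_ds α m s ρ (by linarith)
    · intro s hs ρ σ
      rw [FF_eq, FF_eq]
    · intro s hs x
      have g := gg s ⟨hs.1.le, hs.2⟩ x
      simp only [hpdef]
      rw [LinearIsometryEquiv.norm_map, norm_smul, norm_neg, norm_inv,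
        Real.norm_of_nonneg (vpos s x).le]
      have : (PP h s x)⁻¹ * ‖PP h1 s x‖ ≤ K1 * (1 + ‖x‖) := by
        rw [inv_mul_le_iff₀ (vpos s x)]; linarith
      refine this.trans (mul_le_mul_of_nonneg_right ?_ (by positivity))
      have : 0 ≤ m ^ 2 := sq_nonneg m
      linarith
    · intro s hs ρ
      refine (FF1_bound α m s ρ hα hm hs.1.le).trans (mul_le_mul_of_nonneg_right ?_ (by positivity))
      have : 0 ≤ m ^ 2 := sq_nonneg m
      linarith
    · intro s hs x
      refine (ub s hs x).trans (mul_le_mul_of_nonneg_right ?_ (by positivity))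
      have : 0 ≤ m ^ 2 := sq_nonneg m
      linarith
    · intro s hs ρ
      refine (FF_bound α m s ρ hα hm hs.1).trans (mul_le_mul_of_nonneg_right ?_ (by positivity))
      linarith
    · have q := PP_cont C h hch hb
      exact (q.log fun z => (vpos _ _).ne').neg.continuousOn
    · intro a θ ρ σ hθ hρ hσ
      have e := init_mono U U1 hd α m hc a θ hθ ρ |σ| (abs_nonneg σ) hσ
      unfold KK
      simp only [hh, PP_zero]
      rcases le_total 0 σ with h0 | h0
      · rw [abs_of_nonneg h0] at e
        linarith
      · rw [abs_of_nonpos h0, FF_even, neg_smul, sub_neg_eq_add, ← sub_eq_add_neg] at e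
        linarith
  refine ⟨vpos T, p T, hp T, ?_⟩
  refine lip_of_second_diff _ (p T) (hp T) _ (le_max_of_le_left (le_min (by positivity) hL0)) ?_
  intro a b
  set Λ := max (min (1 / T) L) (-(α / (1 + α * T) - (m / (1 + α * T)) ^ 2)) with hΛ
  rw [abs_le]
  constructor
  · rcases eq_or_ne b 0 with rfl | hb0
    · simp; linarith
    · have hn : 0 < ‖b‖ := norm_pos_iff.2 hb0
      have k := lower a (‖b‖⁻¹ • b) ‖b‖ (by rw [norm_smul, norm_inv, norm_norm, inv_mul_cancel₀ hn.ne']) hn.le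
      unfold KK at k
      simp only [smul_inv_smul₀ hn.ne', zero_smul, add_zero, sub_zero] at k
      have f0 : FF α m T 0 = 0 := by simp [FF]
      have f1 := FF_final α m T ‖b‖
      have f2 : -(α / (1 + α * T) - (m / (1 + α * T)) ^ 2) * ‖b‖ ^ 2 ≤ Λ * ‖b‖ ^ 2 :=
        mul_le_mul_of_nonneg_right (le_max_right _ _) (by positivity)
      linarith
  · have k1 := upper_L U U1 hd L hL C hb T a b
    have k2 := upper_s U hcU C hb T hT a b
    have k3 : min (1 / T) L * ‖b‖ ^ 2 ≤ Λ * ‖b‖ ^ 2 :=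
      mul_le_mul_of_nonneg_right (le_max_left _ _) (by positivity)
    rcases min_choice (1 / T) L with hmin | hmin <;> rw [hmin] at k3 <;> linarith

lemma Jfg_pos (f g : ℝ → ℝ)
    (hf_cont : ContinuousOn f (Set.Ici 0)) (hg_cont : ContinuousOn g (Set.Ici 0))
    (hg_pos : ∀ t, 0 < t → 0 < g t) (t : ℝ) (ht : 0 < t) : 0 < Jfg f g t := by
  unfold Jfg
  have hsub : Set.uIcc 0 t ⊆ Set.Ici (0:ℝ) := by
    rw [Set.uIcc_of_le ht.le]; exact Set.Icc_subset_Ici_self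
  have hF : ContinuousOn (fun s => ∫ v in (0:ℝ)..s, f v) (Set.uIcc 0 t) :=
    intervalIntegral.continuousOn_primitive_interval
      ((hf_cont.mono hsub).integrableOn_compact isCompact_uIcc)
  refine intervalIntegral.intervalIntegral_pos_of_pos_on ?_ ?_ ht
  · refine ContinuousOn.intervalIntegrable ?_
    exact (Real.continuous_exp.comp_continuousOn (continuousOn_const.mul hF)).mul
      ((hg_cont.mono hsub).pow 2)
  · intro s hs
    have := hg_pos s hs.1
    positivity

lemma Jfg_eq (f g : ℝ → ℝ)
    (hf_cont : ContinuousOn f (Set.Ici 0)) (t : ℝ) (ht : 0 < t) :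
    Jfg f g t = c0 f t ^ 2 * c1 f g t := by
  unfold Jfg c1
  rw [← intervalIntegral.integral_const_mul]
  refine intervalIntegral.integral_congr fun s hs => ?_
  rw [Set.uIcc_of_le ht.le] at hs
  have hi : ∀ a b, 0 ≤ a → a ≤ b → IntervalIntegrable f volume a b := by
    intro a b ha hab
    refine ContinuousOn.intervalIntegrable (hf_cont.mono ?_)
    rw [Set.uIcc_of_le hab]
    exact fun z hz => ha.trans hz.1
  have h := intervalIntegral.integral_add_adjacent_intervals (hi 0 s le_rfl hs.1) (hi s t hs.1 hs.2)
  simp only [c0]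
  rw [← h, ← mul_assoc, ← Real.exp_nat_mul, ← Real.exp_add]
  congr 2
  push_cast
  ring

lemma pt_eq {d : ℕ} (f g : ℝ → ℝ) (p₀ : EuclideanSpace ℝ (Fin d) → ℝ)
    (hp₀_pos : ∀ x, 0 < p₀ x) (t : ℝ) (h1 : 0 < c1 f g t) :
    ∃ A : ℝ, 0 < A ∧ ∀ x, pt f g p₀ t x =
      A * PP (fun z => Real.exp (-(-Real.log (p₀ (c0 f t • z))))) (c1 f g t) x := by
  set c := c0 f t with hc
  set s := c1 f g t with hs
  have c_pos : 0 < c := Real.exp_pos _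
  have hsq : 0 < Real.sqrt s := Real.sqrt_pos.2 h1
  set R := c * Real.sqrt s with hR
  have R_pos : 0 < R := mul_pos c_pos hsq
  set n := Module.finrank ℝ (EuclideanSpace ℝ (Fin d))
  refine ⟨(2 * Real.pi * s) ^ (-(d : ℝ) / 2) * R ^ n, ?_, ?_⟩
  · have := Real.pi_pos
    positivity
  · intro x
    set φ : EuclideanSpace ℝ (Fin d) → ℝ := fun y =>
      Real.exp (-‖x - c⁻¹ • y‖ ^ 2 / (2 * s)) * p₀ y with hφ
    have e1 : pt f g p₀ t x = (2 * Real.pi * s) ^ (-(d : ℝ) / 2) * ∫ y, φ y := by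
      unfold pt
      rw [← integral_const_mul]
      simp only [hφ, mul_assoc, hc, hs]
    have e2 : ∫ y, φ y = R ^ n * ∫ z, φ (c • x + R • z) := by
      have q := Measure.integral_comp_smul (volume : Measure (EuclideanSpace ℝ (Fin d)))
        (fun y => φ (c • x + y)) R
      rw [integral_add_left_eq_self, abs_of_pos (by positivity), smul_eq_mul] at q
      rw [q, ← mul_assoc, mul_inv_cancel₀ (by positivity), one_mul]
    rw [e1, e2, ← mul_assoc]
    congr 1
    unfold PP
    congr 1
    ext z
    have a1 : x - c⁻¹ • (c • x + R • z) = -(Real.sqrt s • z) := by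
      rw [smul_add, smul_smul, smul_smul, inv_mul_cancel₀ c_pos.ne', hR, inv_mul_cancel_left₀ c_pos.ne']
      simp
    have a2 : c • (x + Real.sqrt s • z) = c • x + R • z := by
      rw [smul_add, smul_smul]
    simp only [hφ, a1, a2, neg_neg, smul_eq_mul, ww]
    rw [Real.exp_log (hp₀_pos _), norm_neg, norm_smul, Real.norm_of_nonneg hsq.le, mul_pow,
      Real.sq_sqrt h1.le]
    congr 2
    field_simp

lemma prof_conv {d : ℕ} (l : EuclideanSpace ℝ (Fin d) → ℝ) (α₀ M₀ L₀ : ℝ)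
    (hconc : WeaklyConcave l α₀ M₀)
    (hlip : ∀ x y, ‖gradient l x - gradient l y‖ ≤ L₀ * ‖x - y‖)
    (x y : EuclideanSpace ℝ (Fin d)) :
    α₀ * ‖x - y‖ ^ 2 - ‖x - y‖ * fM M₀ ‖x - y‖ ≤ - ⟪gradient l x - gradient l y, x - y⟫ := by
  rcases eq_or_ne x y with rfl | hxy
  · simp
  have hr : 0 < ‖x - y‖ := norm_pos_iff.2 (sub_ne_zero.2 hxy)
  have hg : ∀ z, gradient (fun x => -l x) z = - gradient l z := by
    intro z
    unfold gradient
    rw [fderiv_fun_neg, map_neg]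
  have h := hconc ‖x - y‖ hr
  have h2 : profile (fun x => -l x) ‖x - y‖ ≤
      - ⟪gradient l x - gradient l y, x - y⟫ / ‖x - y‖ ^ 2 := by
    unfold profile
    refine csInf_le ⟨-L₀, ?_⟩ ⟨x, y, rfl, ?_⟩
    · rintro z ⟨a, b, hab, rfl⟩
      rw [hg, hg]
      have hab' : 0 < ‖a - b‖ := hab ▸ hr
      rw [le_div_iff₀ (by positivity)]
      have k := abs_real_inner_le_norm (-gradient l a - -gradient l b) (a - b)
      have k2 : ‖-gradient l a - -gradient l b‖ ≤ L₀ * ‖a - b‖ := by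
        rw [← neg_sub', norm_neg]; exact hlip a b
      have k3 := mul_le_mul_of_nonneg_right k2 hab'.le
      have k4 := neg_abs_le ⟪-gradient l a - -gradient l b, a - b⟫
      nlinarith
    · rw [hg, hg, ← neg_sub', inner_neg_left]
  have h3 := h.trans h2
  rw [le_div_iff₀ (by positivity)] at h3
  refine le_trans (le_of_eq ?_) h3
  field_simp

theorem stmt7 {d : ℕ} (hd : 1 ≤ d) (f g : ℝ → ℝ)
    (hf_cont : ContinuousOn f (Set.Ici 0)) (hg_cont : ContinuousOn g (Set.Ici 0))
    (hf_nonneg : ∀ t, 0 ≤ t → 0 ≤ f t) (hg_pos : ∀ t, 0 < t → 0 < g t)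
    (α₀ M₀ L₀ : ℝ) (hα₀ : 0 < α₀) (hM₀ : 0 < M₀) (hL₀ : 0 < L₀)
    (p₀ : EuclideanSpace ℝ (Fin d) → ℝ) (hp₀_pos : ∀ x, 0 < p₀ x)
    (hp₀_smooth : ContDiff ℝ 2 p₀) (hp₀_prob : ∫ x, p₀ x = 1)
    (hp₀_conc : WeaklyConcave (fun x => Real.log (p₀ x)) α₀ M₀)
    (hp₀_lip : ∀ x y : EuclideanSpace ℝ (Fin d),
      ‖gradient (fun z => Real.log (p₀ z)) x -
          gradient (fun z => Real.log (p₀ z)) y‖ ≤ L₀ * ‖x - y‖) :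
    ∀ t : ℝ, 0 < t → ∀ x y : EuclideanSpace ℝ (Fin d),
      ‖gradient (fun z => Real.log (pt f g p₀ t z)) x -
          gradient (fun z => Real.log (pt f g p₀ t z)) y‖ ≤
        Lt f g α₀ M₀ L₀ t * ‖x - y‖ := by
  intro t ht
  have hJ := Jfg_pos f g hf_cont hg_cont hg_pos t ht
  have hJe := Jfg_eq f g hf_cont t ht
  have c_pos : 0 < c0 f t := Real.exp_pos _
  have s_pos : 0 < c1 f g t := by
    rw [hJe] at hJ
    exact pos_of_mul_pos_right hJ (by positivity)
  obtain ⟨A, hA, hpt⟩ := pt_eq f g p₀ hp₀_pos t s_pos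
  set c := c0 f t with hcdef
  set s := c1 f g t with hsdef
  set l : EuclideanSpace ℝ (Fin d) → ℝ := fun z => Real.log (p₀ z) with hl
  have l_smooth : ContDiff ℝ 2 l := hp₀_smooth.log fun x => (hp₀_pos x).ne'
  have l_diff : Differentiable ℝ l := l_smooth.differentiable (by norm_num)
  set U : EuclideanSpace ℝ (Fin d) → ℝ := fun z => -l (c • z) with hU
  have U_smooth : ContDiff ℝ 2 U := (l_smooth.comp (contDiff_const_smul c)).neg
  have U1_smooth : ContDiff ℝ 1 (fderiv ℝ U) := U_smooth.fderiv_right (by norm_num)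
  have U2_cont : Continuous (fderiv ℝ (fderiv ℝ U)) := U1_smooth.continuous_fderiv (by norm_num)
  have hUd : ∀ x, HasFDerivAt U (fderiv ℝ U x) x := fun x =>
    (U_smooth.differentiable (by norm_num) x).hasFDerivAt
  have hU1d : ∀ x, HasFDerivAt (fderiv ℝ U) (fderiv ℝ (fderiv ℝ U) x) x := fun x =>
    (U1_smooth.differentiable (by norm_num) x).hasFDerivAt
  have hU1 : ∀ x, fderiv ℝ U x = InnerProductSpace.toDual ℝ _ (-(c • gradient l (c • x))) := by
    intro x
    have q : HasFDerivAt (fun z : EuclideanSpace ℝ (Fin d) => c • z)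
      (c • ContinuousLinearMap.id ℝ _) x := (hasFDerivAt_id x).const_smul c
    have q2 := (l_diff (c • x)).hasGradientAt.hasFDerivAt
    have q3 := (q2.comp x q).neg
    refine q3.fderiv.trans ?_
    ext e
    simp [inner_smul_left]
  have hL : ∀ x y, ‖fderiv ℝ U x - fderiv ℝ U y‖ ≤ (c ^ 2 * L₀) * ‖x - y‖ := by
    intro x y
    rw [hU1, hU1, ← map_sub, LinearIsometryEquiv.norm_map, ← neg_sub', norm_neg, ← smul_sub,
      norm_smul, Real.norm_of_nonneg c_pos.le]
    have k := hp₀_lip (c • x) (c • y)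
    rw [← smul_sub, norm_smul, Real.norm_of_nonneg c_pos.le] at k
    have := mul_le_mul_of_nonneg_left k c_pos.le
    linarith
  have hc : ∀ x y, (c ^ 2 * α₀) * ‖x - y‖ ^ 2 -
      ‖x - y‖ * (2 * (c * Real.sqrt M₀) * Real.tanh ((c * Real.sqrt M₀) * ‖x - y‖ / 2))
      ≤ (fderiv ℝ U x - fderiv ℝ U y) (x - y) := by
    intro x y
    have k := prof_conv l α₀ M₀ L₀ hp₀_conc hp₀_lip (c • x) (c • y)
    rw [← smul_sub, norm_smul, Real.norm_of_nonneg c_pos.le, inner_smul_right] at k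
    rw [hU1, hU1, ← map_sub, InnerProductSpace.toDual_apply_apply, ← neg_sub', inner_neg_left, ← smul_sub,
      inner_smul_left]
    simp only [fM, conj_trivial] at k ⊢
    have e : Real.sqrt M₀ * (c * ‖x - y‖) / 2 = (c * Real.sqrt M₀) * ‖x - y‖ / 2 := by ring
    rw [e] at k
    linarith
  obtain ⟨vp, p, hp, hpl⟩ := heat_lip hd U _ _ hUd hU1d U2_cont (c ^ 2 * α₀) (c * Real.sqrt M₀)
    (c ^ 2 * L₀) (by positivity) (by positivity) (by positivity) hL hc s s_pos
  have hgrad : ∀ x, gradient (fun z => Real.log (pt f g p₀ t z)) x = -p x := by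
    intro x
    have e : (fun z => Real.log (pt f g p₀ t z)) = fun z =>
        Real.log A - -Real.log (PP (fun z => Real.exp (-U z)) s z) := by
      ext z
      rw [hpt z, Real.log_mul hA.ne' (vp z).ne']
      ring
    rw [e]
    refine HasGradientAt.gradient ?_
    have q := (hp x).hasFDerivAt.const_sub (Real.log A)
    rw [hasGradientAt_iff_hasFDerivAt, map_neg]
    exact q
  intro x y
  rw [hgrad, hgrad, ← neg_sub', norm_neg]
  refine (hpl x y).trans (le_of_eq ?_)
  congr 1
  unfold Lt alphaT MT
  rw [hJe, ← hcdef, ← hsdef]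
  congr 2
  have h1 : 0 < 1 + c ^ 2 * α₀ * s := by positivity
  have h2 : 1 + α₀ * (c ^ 2 * s) = 1 + c ^ 2 * α₀ * s := by ring
  rw [h2, div_pow, mul_pow, Real.sq_sqrt hM₀.le]
  congr 1
  · rw [div_eq_div_iff h1.ne' (by positivity)]
    field_simp
  · ring
end

section
/- (Continuous-time contraction for the probability flow ODE.) Let d ≥ 1, T > 0, let f, g : [0, T] → ℝ be continuous with f ≥ 0, let K : [0, T] → ℝ be continuous, and let s : [0, T] × ℝ^d → ℝ^d satisfy ⟨s(u, a) − s(u, b), a − b⟩ ≤ −K(u) ‖a − b‖² for all u ∈ [0, T] and a, b ∈ ℝ^d. Suppose x, y : [0, T] → ℝ^d are differentiable and satisfy x'(t) = f(T−t) x(t) + (1/2) g(T−t)² s(T−t, x(t)) and y'(t) = f(T−t) y(t) + (1/2) g(T−t)² s(T−t, y(t)) for all t ∈ [0, T]. Then for every t ∈ [0, T]: ‖x(t) − y(t)‖² ≤ exp( ∫₀ᵗ ( 2 f(T−u) − g(T−u)² K(T−u) ) du ) · ‖x(0) − y(0)‖². -/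
open scoped RealInnerProductSpace

theorem stmt14 {d : ℕ} (hd : 1 ≤ d) (T : ℝ) (hT : 0 < T)
    (f g K : ℝ → ℝ)
    (hf_cont : ContinuousOn f (Set.Icc 0 T)) (hg_cont : ContinuousOn g (Set.Icc 0 T))
    (hf_nonneg : ∀ u ∈ Set.Icc (0:ℝ) T, 0 ≤ f u)
    (hK_cont : ContinuousOn K (Set.Icc 0 T))
    (s : ℝ → EuclideanSpace ℝ (Fin d) → EuclideanSpace ℝ (Fin d))
    (hs : ∀ u ∈ Set.Icc (0:ℝ) T, ∀ a b : EuclideanSpace ℝ (Fin d),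
      ⟪s u a - s u b, a - b⟫ ≤ -K u * ‖a - b‖ ^ 2)
    (x y : ℝ → EuclideanSpace ℝ (Fin d))
    (hx : ∀ t ∈ Set.Icc (0:ℝ) T,
      HasDerivAt x (f (T - t) • x t + ((1/2) * g (T - t) ^ 2) • s (T - t) (x t)) t)
    (hy : ∀ t ∈ Set.Icc (0:ℝ) T,
      HasDerivAt y (f (T - t) • y t + ((1/2) * g (T - t) ^ 2) • s (T - t) (y t)) t) :
    ∀ t ∈ Set.Icc (0:ℝ) T,
      ‖x t - y t‖ ^ 2 ≤
        Real.exp (∫ u in (0:ℝ)..t, (2 * f (T - u) - g (T - u) ^ 2 * K (T - u))) *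
          ‖x 0 - y 0‖ ^ 2 := by
  have hmem : ∀ u ∈ Set.Icc (0:ℝ) T, T - u ∈ Set.Icc (0:ℝ) T := fun u hu =>
    ⟨by linarith [hu.2], by linarith [hu.1]⟩
  set φ : ℝ → ℝ := fun u => 2 * f (T - u) - g (T - u) ^ 2 * K (T - u) with hφ
  have hsub : ContinuousOn (fun u : ℝ => T - u) (Set.Icc 0 T) := by fun_prop
  have hφc : ContinuousOn φ (Set.Icc 0 T) := by
    have h1 := hf_cont.comp hsub hmem
    have h2 := hg_cont.comp hsub hmem
    have h3 := hK_cont.comp hsub hmem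
    exact (continuousOn_const.mul h1).sub ((h2.pow 2).mul h3)
  -- a globally continuous extension of the rate
  set ψ : ℝ → ℝ := Set.IccExtend hT.le ((Set.Icc 0 T).restrict φ) with hψ
  have hψc : Continuous ψ := (continuousOn_iff_continuous_restrict.mp hφc).Icc_extend'
  have hψφ : ∀ u ∈ Set.Icc (0:ℝ) T, ψ u = φ u := fun u hu => by
    rw [hψ, Set.IccExtend_of_mem _ _ hu]; rfl
  have hI : ∀ t, HasDerivAt (fun t => ∫ u in (0:ℝ)..t, ψ u) (ψ t) t := fun t =>
    hψc.integral_hasStrictDerivAt 0 t |>.hasDerivAt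
  have hE : ∀ t ∈ Set.Icc (0:ℝ) T, ∃ e', e' ≤ 0 ∧
      HasDerivAt (fun t => Real.exp (-∫ u in (0:ℝ)..t, ψ u) * ‖x t - y t‖ ^ 2) e' t := by
    intro t ht
    refine ⟨_, ?_, ((hI t).neg.exp).mul ((hx t ht).sub (hy t ht)).norm_sq⟩
    have hst := hs (T - t) (hmem t ht) (x t) (y t)
    have hpos := Real.exp_pos (-∫ u in (0:ℝ)..t, ψ u)
    have e1 : ⟪x t - y t, f (T - t) • x t + ((1/2) * g (T - t) ^ 2) • s (T - t) (x t)
        - (f (T - t) • y t + ((1/2) * g (T - t) ^ 2) • s (T - t) (y t))⟫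
        = f (T - t) * ‖x t - y t‖ ^ 2 + ((1/2) * g (T - t) ^ 2) *
          ⟪s (T - t) (x t) - s (T - t) (y t), x t - y t⟫ := by
      have : f (T - t) • x t + ((1/2) * g (T - t) ^ 2) • s (T - t) (x t)
        - (f (T - t) • y t + ((1/2) * g (T - t) ^ 2) • s (T - t) (y t))
        = f (T - t) • (x t - y t) + ((1/2) * g (T - t) ^ 2) •
          (s (T - t) (x t) - s (T - t) (y t)) := by
        simp only [smul_sub]; abel
      rw [this, inner_add_right, inner_smul_right, inner_smul_right,
        real_inner_self_eq_norm_sq, real_inner_comm]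
    simp only [Pi.sub_apply, Pi.neg_apply]
    rw [e1, hψφ t ht]
    have h2 := mul_le_mul_of_nonneg_left hst (sq_nonneg (g (T - t)))
    have h3 : -φ t * ‖x t - y t‖ ^ 2 + 2 * (f (T - t) * ‖x t - y t‖ ^ 2 +
        ((1/2) * g (T - t) ^ 2) * ⟪s (T - t) (x t) - s (T - t) (y t), x t - y t⟫) ≤ 0 := by
      simp only [hφ]; linarith
    have h4 := mul_nonpos_of_nonneg_of_nonpos hpos.le h3
    linarith
  have hanti : AntitoneOn (fun t => Real.exp (-∫ u in (0:ℝ)..t, ψ u) * ‖x t - y t‖ ^ 2)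
      (Set.Icc 0 T) := by
    apply antitoneOn_of_deriv_nonpos (convex_Icc 0 T)
    · intro t ht
      obtain ⟨_, _, h⟩ := hE t ht
      exact h.continuousAt.continuousWithinAt
    · intro t ht
      obtain ⟨_, _, h⟩ := hE t (interior_subset ht)
      exact h.differentiableAt.differentiableWithinAt
    · intro t ht
      obtain ⟨_, h0, h⟩ := hE t (interior_subset ht)
      rw [h.deriv]; exact h0
  intro t ht
  have hint : ∫ u in (0:ℝ)..t, φ u = ∫ u in (0:ℝ)..t, ψ u := by
    apply intervalIntegral.integral_congr
    intro u hu
    rw [Set.uIcc_of_le ht.1] at hu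
    exact (hψφ u ⟨hu.1, hu.2.trans ht.2⟩).symm
  have hle := hanti (Set.left_mem_Icc.mpr hT.le) ht ht.1
  simp only [intervalIntegral.integral_same, neg_zero, Real.exp_zero, one_mul] at hle
  rw [hint]
  have h5 := mul_le_mul_of_nonneg_left hle (Real.exp_pos (∫ u in (0:ℝ)..t, ψ u)).le
  rwa [← mul_assoc, ← Real.exp_add, add_neg_cancel, Real.exp_zero, one_mul] at h5
end
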